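/- arXiv:2404.19233 — 13 statements merged into one kernel-verified Lean document; each statement's English description precedes it below -/
import Mathlib

section
/- For every positive integer n, there exists a red/blue coloring of n-dimensional Euclidean space E^n that contains no red congruent copy of ℓ_3 and no blue congruent copy of ℓ_20 (i.e., E^n ↛ (ℓ_3, ℓ_20)). -/
/-!
A point `x` is coloured red when `29 ‖x‖²` lies in `[0, 29)` modulo `120`. Along a line
`x + k v` with `‖v‖ = 1` the quantity `29 ‖x + k v‖²` is a quadratic progression
`29 k² + β k + γ`, where `β` and `γ` are arbitrary reals, with constant second difference `58`.

*No red `ℓ_3`.* If `t₀, t₁, t₂` lie in `[0, 29)` modulo `120`, then `t₀ - 2 t₁ + t₂` lies in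
`(-58, 58)` modulo `120`, and this open interval contains no number congruent to `58`.

*No blue `ℓ_20`.* It has to be shown that for all real `β`, `γ` some `29 k² + β k + γ` with
`k < 20` lies in `[0, 29)` modulo `120` (`exists_hit`). Equivalently, for each `β` the values
`29 k² + β k` have no gap longer than `29` modulo `120`. Only `β ∈ [0, 120)` matters. This range is
split into 29 intervals, and on each of them `table` records one cyclic chain of lifts
`29 k² + β k - 120 m` that starts at some value, ends `120` higher, and never increases by more
than `29` in one step. Since the step sizes are affine in `β`, they only need to be bounded at the
two (integer) endpoints of the interval, which is decidable integer arithmetic. A chain that goes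
from below `29` up to a nonnegative value in steps of at most `29` meets `[0, 29)`
(`exists_mem_of_isChain`).
-/

/-- The lift `29 k² + β k - 120 m` of the `k`-th value, for the pair `p = (k, m)`. -/
def liftVal {R : Type*} [CommRing R] (β : R) (p : ℕ × ℤ) : R :=
  29 * (p.1 : R) ^ 2 + β * (p.1 : R) - 120 * (p.2 : R)

/-- For both `β = a` and `β = b` (hence for every `β` in between), the value of `q` exceeds that
of `p` by at most `29`. -/
def Step (a b : ℤ) (p q : ℕ × ℤ) : Prop :=
  liftVal a q ≤ liftVal a p + 29 ∧ liftVal b q ≤ liftVal b p + 29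

instance (a b : ℤ) (p q : ℕ × ℤ) : Decidable (Step a b p q) := by
  unfold Step; infer_instance

/-- A chain of lifts to be used for `β ∈ [a, b]`: it starts at `(k₀, 0)`, runs through `mid`, and
ends at `(k₀, -1)`, whose value is `120` larger than the initial one. -/
structure Row where
  /-- Left endpoint of the interval of slopes. -/
  a : ℤ
  /-- Right endpoint of the interval of slopes. -/
  b : ℤ
  /-- Index at which the chain starts and ends. -/
  k₀ : ℕ
  /-- Intermediate pairs `(k, m)`. -/
  mid : List (ℕ × ℤ)

/-- The full chain of a row. -/
def Row.chain (r : Row) : List (ℕ × ℤ) := (r.k₀, 0) :: (r.mid ++ [(r.k₀, -1)])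

/-- Chains for slopes covering `[0, 120]`. Many rows are translates of each other: replacing `k`
by `k + 2` changes the slope by `-116`, which is `4` modulo `120`. -/
def table : List Row := [
  ⟨0, 4, 1, [(10, 24), (11, 29), (8, 15), (6, 8), (4, 3), (5, 5)]⟩,
  ⟨4, 8, 3, [(12, 33), (13, 39), (10, 22), (8, 13), (6, 6), (7, 9)]⟩,
  ⟨8, 12, 5, [(14, 42), (15, 49), (12, 29), (10, 18), (8, 9), (9, 13)]⟩,
  ⟨12, 16, 7, [(16, 51), (17, 59), (14, 36), (12, 23), (10, 12), (11, 17)]⟩,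
  ⟨16, 20, 9, [(18, 60), (19, 69), (16, 43), (14, 28), (12, 15), (13, 21)]⟩,
  ⟨20, 24, 1, [(4, 4), (6, 9), (5, 6), (7, 12), (9, 20), (2, 0)]⟩,
  ⟨24, 30, 0, [(6, 10), (5, 7), (8, 17), (7, 13), (9, 21), (11, 31), (4, 4), (3, 2)]⟩,
  ⟨30, 34, 1, [(8, 17), (7, 13), (10, 26), (9, 21), (11, 31), (6, 9), (5, 6)]⟩,
  ⟨34, 38, 3, [(10, 24), (9, 19), (12, 35), (11, 29), (13, 41), (8, 14), (7, 10)]⟩,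
  ⟨38, 42, 1, [(5, 7), (12, 38), (11, 32), (14, 51), (13, 44), (15, 58), (10, 26)]⟩,
  ⟨42, 46, 3, [(7, 11), (14, 49), (13, 42), (16, 64), (15, 56), (17, 72), (12, 35)]⟩,
  ⟨46, 50, 5, [(9, 15), (16, 60), (15, 52), (18, 77), (17, 68), (19, 86), (14, 44)]⟩,
  ⟨50, 53, 1, [(2, 1), (7, 14), (11, 33), (18, 85), (17, 76), (5, 7), (6, 10), (3, 2)]⟩,
  ⟨53, 58, 0, [(7, 15), (8, 19), (11, 34), (5, 8), (6, 11), (3, 3), (1, 0), (2, 1)]⟩,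
  ⟨58, 62, 0, [(9, 24), (10, 29), (7, 15), (5, 8), (3, 3), (4, 5)]⟩,
  ⟨62, 66, 2, [(11, 33), (12, 39), (9, 22), (7, 13), (5, 6), (6, 9)]⟩,
  ⟨66, 70, 4, [(13, 42), (14, 49), (11, 29), (9, 18), (7, 9), (8, 13)]⟩,
  ⟨70, 74, 6, [(15, 51), (16, 59), (13, 36), (11, 23), (9, 12), (10, 17)]⟩,
  ⟨74, 78, 8, [(17, 60), (18, 69), (15, 43), (13, 28), (11, 15), (12, 21)]⟩,
  ⟨78, 82, 0, [(3, 4), (5, 9), (4, 6), (6, 12), (8, 20), (1, 0)]⟩,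
  ⟨82, 86, 2, [(5, 7), (7, 14), (6, 10), (8, 18), (10, 28), (3, 1)]⟩,
  ⟨86, 92, 1, [(7, 16), (6, 12), (9, 25), (8, 20), (10, 30), (12, 42), (5, 8), (4, 5)]⟩,
  ⟨92, 96, 2, [(9, 24), (8, 19), (11, 35), (10, 29), (12, 41), (7, 14), (6, 10)]⟩,
  ⟨96, 100, 0, [(4, 7), (11, 38), (10, 32), (13, 51), (12, 44), (14, 58), (9, 26)]⟩,
  ⟨100, 104, 2, [(6, 11), (13, 49), (12, 42), (15, 64), (14, 56), (16, 72), (11, 35)]⟩,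
  ⟨104, 108, 4, [(8, 15), (15, 60), (14, 52), (17, 77), (16, 68), (18, 86), (13, 44)]⟩,
  ⟨108, 112, 0, [(1, 1), (6, 14), (10, 33), (17, 85), (16, 76), (19, 104), (13, 52), (2, 2)]⟩,
  ⟨112, 115, 0, [(8, 23), (12, 46), (19, 105), (18, 95), (6, 14), (7, 18), (4, 7), (2, 2)]⟩,
  ⟨115, 120, 0, [(1, 1), (8, 23), (9, 28), (12, 46), (6, 14), (7, 18), (4, 7), (2, 2)]⟩]

theorem table_valid :
    ∀ r ∈ table, r.chain.IsChain (Step r.a r.b) ∧ ∀ p ∈ r.chain, p.1 < 20 := by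
  decide +kernel

theorem table_cover : ∀ i < 120, ∃ r ∈ table, r.a ≤ (i : ℕ) ∧ ((i : ℕ) : ℤ) + 1 ≤ r.b := by
  decide +kernel

/-- A step bound at the endpoints extends to all slopes in between, by affinity in `β`. -/
theorem Step.le {a b : ℤ} {p q : ℕ × ℤ} (h : Step a b p q) {β : ℝ}
    (ha : (a : ℝ) ≤ β) (hb : β ≤ b) : liftVal β q ≤ liftVal β p + 29 := by
  obtain ⟨h1, h2⟩ := h
  have h1' : liftVal (a : ℝ) q ≤ liftVal (a : ℝ) p + 29 := by
    unfold liftVal at h1 ⊢; exact_mod_cast h1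
  have h2' : liftVal (b : ℝ) q ≤ liftVal (b : ℝ) p + 29 := by
    unfold liftVal at h2 ⊢; exact_mod_cast h2
  unfold liftVal at *
  -- The side of the slope on which the bound is tighter depends on the sign of `q.1 - p.1`.
  rcases le_total (p.1 : ℝ) q.1 with hs | hs <;> nlinarith

/-- A sequence going from below `29` to a nonnegative value in steps of at most `29` meets
`[0, 29)`. -/
theorem exists_mem_of_isChain {α : Type*} (f : α → ℝ) (l : List α) (p : α)
    (hc : (p :: l).IsChain (fun x y => f y ≤ f x + 29)) (hp : f p < 29)
    (hl : 0 ≤ f ((p :: l).getLast (List.cons_ne_nil p l))) :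
    ∃ q ∈ p :: l, 0 ≤ f q ∧ f q < 29 := by
  induction l generalizing p with
  | nil => exact ⟨p, by simp, by simpa using hl, hp⟩
  | cons q l ih =>
    by_cases h0 : 0 ≤ f p
    · exact ⟨p, by simp, h0, hp⟩
    · rw [List.isChain_cons_cons] at hc
      obtain ⟨x, hx, h⟩ := ih q hc.2 (by linarith [hc.1]) (by simpa using hl)
      exact ⟨x, List.mem_cons_of_mem _ hx, h⟩

/-- Every real quadratic progression with leading coefficient `29` hits `[0, 29)` modulo `120`
within its first `20` terms. -/
theorem exists_hit (β γ : ℝ) : ∃ k : ℕ, k < 20 ∧ ∃ m : ℤ,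
    120 * (m : ℝ) ≤ 29 * (k : ℝ) ^ 2 + β * k + γ ∧
    29 * (k : ℝ) ^ 2 + β * k + γ < 120 * (m : ℝ) + 29 := by
  -- Reduce the slope to `β' ∈ [0, 120)`.
  obtain ⟨n, β', hβ, h0, h1⟩ : ∃ (n : ℤ) (β' : ℝ), β = β' + 120 * n ∧ 0 ≤ β' ∧ β' < 120 := by
    refine ⟨⌊β / 120⌋, β - 120 * ⌊β / 120⌋, by ring, ?_, ?_⟩
    · linarith [Int.floor_le (β / 120)]
    · linarith [Int.lt_floor_add_one (β / 120)]
  have hi : ⌊β'⌋₊ < 120 := (Nat.floor_lt h0).2 (by exact_mod_cast h1)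
  obtain ⟨r, hr, hra, hrb⟩ := table_cover _ hi
  have ha : (r.a : ℝ) ≤ β' := by
    have : (r.a : ℝ) ≤ (⌊β'⌋₊ : ℝ) := by exact_mod_cast hra
    exact this.trans (Nat.floor_le h0)
  have hb : β' ≤ r.b := by
    have : (⌊β'⌋₊ : ℝ) + 1 ≤ (r.b : ℝ) := by exact_mod_cast hrb
    exact (Nat.lt_floor_add_one β').le.trans this
  obtain ⟨hc, hk⟩ := table_valid r hr
  -- Shift `γ` by a multiple of `120` so that the chain starts in `[-91, 29)`.
  set y : ℝ := liftVal β' (r.k₀, 0) + γ with hy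
  set M : ℤ := ⌊(y + 91) / 120⌋ with hM
  have hM1 : (M : ℝ) ≤ (y + 91) / 120 := Int.floor_le _
  have hM2 : (y + 91) / 120 < M + 1 := Int.lt_floor_add_one _
  have hlast : liftVal β' (r.k₀, -1) = liftVal β' (r.k₀, 0) + 120 := by
    simp only [liftVal]; push_cast; ring
  obtain ⟨q, hq, hq0, hq1⟩ := exists_mem_of_isChain (fun p => liftVal β' p + γ - 120 * M)
    (r.mid ++ [(r.k₀, -1)]) (r.k₀, 0)
    (hc.imp fun p q h => by linarith [h.le ha hb])
    (by linarith)
    (by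
      simp only [← List.cons_append, List.getLast_append_singleton]
      linarith)
  refine ⟨q.1, hk q hq, M + q.2 + n * q.1, ?_⟩
  simp only [liftVal] at hq0 hq1
  subst hβ
  push_cast
  constructor <;> linarith

theorem norm_sq_line {n : ℕ} (x v : EuclideanSpace ℝ (Fin n)) (hv : ‖v‖ = 1) (k : ℝ) :
    29 * ‖x + k • v‖ ^ 2 = 29 * k ^ 2 + 58 * inner ℝ x v * k + 29 * ‖x‖ ^ 2 := by
  rw [norm_add_sq_real, inner_smul_right, norm_smul, hv, Real.norm_eq_abs, mul_one, sq_abs]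
  ring


/-- E^n ↛ (ℓ_3, ℓ_20): there is a red/blue coloring of n-dimensional Euclidean
space with no red congruent copy of ℓ_3 and no blue congruent copy of ℓ_20. -/
theorem euclidean_not_arrow_l3_l20 (n : ℕ) (hn : 0 < n) :
    ∃ red : EuclideanSpace ℝ (Fin n) → Prop,
      (¬ ∃ (x v : EuclideanSpace ℝ (Fin n)), ‖v‖ = 1 ∧
        ∀ k : ℕ, k < 3 → red (x + (k : ℝ) • v)) ∧
      (¬ ∃ (x v : EuclideanSpace ℝ (Fin n)), ‖v‖ = 1 ∧
        ∀ k : ℕ, k < 20 → ¬ red (x + (k : ℝ) • v)) := by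
  refine ⟨fun x => ∃ m : ℤ, 120 * (m : ℝ) ≤ 29 * ‖x‖ ^ 2 ∧ 29 * ‖x‖ ^ 2 < 120 * (m : ℝ) + 29,
    ?_, ?_⟩
  · rintro ⟨x, v, hv, h⟩
    -- For `M = m₀ - 2 m₁ + m₂` the bounds put `58 - 120 M` in `(-58, 58)`, so `0 < M < 1`.
    obtain ⟨m₀, h0, h0'⟩ := h 0 (by norm_num)
    obtain ⟨m₁, h1, h1'⟩ := h 1 (by norm_num)
    obtain ⟨m₂, h2, h2'⟩ := h 2 (by norm_num)
    rw [norm_sq_line x v hv] at h0 h0' h1 h1' h2 h2'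
    push_cast at h0 h0' h1 h1' h2 h2'
    have hlo : (0 : ℝ) < ((m₀ - 2 * m₁ + m₂ : ℤ) : ℝ) := by push_cast; linarith
    have hhi : ((m₀ - 2 * m₁ + m₂ : ℤ) : ℝ) < 1 := by push_cast; linarith
    norm_cast at hlo hhi
    omega
  · rintro ⟨x, v, hv, h⟩
    obtain ⟨k, hk, m, h1, h2⟩ := exists_hit (58 * inner ℝ x v) (29 * ‖x‖ ^ 2)
    refine h k hk ⟨m, ?_, ?_⟩ <;> rw [norm_sq_line x v hv] <;> assumption
end

section
/- For every positive integer n, there exists a red/blue coloring of n-dimensional Euclidean space E^n that contains no red congruent copy of ℓ_4 and no blue congruent copy of ℓ_14 (i.e., E^n ↛ (ℓ_4, ℓ_14)). -/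
/-!
The colouring depends only on `‖x‖²`: let `phase x = (5/2)‖x‖² mod 16 ∈ [0, 16)`, and call `x` red
when `phase x < 5`. Along a line of unit direction, `(5/2)‖x + k v‖²` is a quadratic in `k` with
leading coefficient `5/2`, so the phases `y k` of its points have second differences
`y k - 2 y (k+1) + y (k+2)` congruent to `5` modulo `16` (`phase_second_diff`).

* If four consecutive points are red, the phases lie in `[0, 5)`, so the second differences lie in
  `(-10, 10)` and both must equal `5`. Adding them gives `y 0 - y 1 - y 2 + y 3 = 10`, whereas the
  left-hand side is less than `10`.
* If consecutive points are blue, the phases lie in `[5, 16)`, so the second differences lie in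
  `(-22, 22)` and each is `-11`, `5` or `21`. The phases are then affine in `y 0` and `y 1` once
  the sequence of second differences is known. Running through these sequences, the linear
  constraints `5 ≤ y k < 16` become infeasible on every branch by `k = 13`. Few branches survive
  for long, the longest being essentially the period-three patterns built from `-11, 5, 5`, whose
  sum `-1` makes the slope of the phases decrease until they leave the window.
-/

/-- The residue of `(5/2)‖x‖²` modulo `16`, as a real number in `[0, 16)`. -/
noncomputable def phase {n : ℕ} (x : EuclideanSpace ℝ (Fin n)) : ℝ :=
  16 * Int.fract (5 / 32 * ‖x‖ ^ 2)

lemma phase_nonneg {n : ℕ} (x : EuclideanSpace ℝ (Fin n)) : 0 ≤ phase x :=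
  mul_nonneg (by norm_num) (Int.fract_nonneg _)

lemma phase_lt {n : ℕ} (x : EuclideanSpace ℝ (Fin n)) : phase x < 16 := by
  have := Int.fract_lt_one (5 / 32 * ‖x‖ ^ 2)
  unfold phase
  linarith

lemma phase_second_diff {n : ℕ} (x v : EuclideanSpace ℝ (Fin n)) (hv : ‖v‖ = 1) (k : ℕ) :
    ∃ m : ℤ, phase (x + (k : ℝ) • v) - 2 * phase (x + ((k + 1 : ℕ) : ℝ) • v)
      + phase (x + ((k + 2 : ℕ) : ℝ) • v) = 5 + 16 * m := by
  have h (t : ℝ) : ‖x + t • v‖ ^ 2 = ‖x‖ ^ 2 + 2 * t * inner ℝ x v + t ^ 2 := by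
    rw [norm_add_sq_real, inner_smul_right, norm_smul, hv, mul_one, Real.norm_eq_abs, sq_abs]
    ring
  refine ⟨-⌊5 / 32 * ‖x + (k : ℝ) • v‖ ^ 2⌋ + 2 * ⌊5 / 32 * ‖x + ((k + 1 : ℕ) : ℝ) • v‖ ^ 2⌋
    - ⌊5 / 32 * ‖x + ((k + 2 : ℕ) : ℝ) • v‖ ^ 2⌋, ?_⟩
  simp only [phase, Int.fract]
  push_cast
  -- The floors cancel against the chosen integer; the rest is the second difference of `h`.
  have h0 := h k
  have h1 := h (k + 1)
  have h2 := h (k + 2)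
  linear_combination 5 / 2 * h0 - 5 * h1 + 5 / 2 * h2

/-- Four consecutive terms with second differences `5` modulo `16` cannot all lie in `[0, 5)`. -/
lemma no_four_low (y : ℕ → ℝ) (hy : ∀ k < 4, 0 ≤ y k ∧ y k < 5)
    (hd : ∀ k, ∃ m : ℤ, y k - 2 * y (k + 1) + y (k + 2) = 5 + 16 * m) : False := by
  have key (k : ℕ) (hk : k < 2) : y k - 2 * y (k + 1) + y (k + 2) = 5 := by
    obtain ⟨m, hm⟩ := hd k
    have a0 := hy k (by omega)
    have a1 := hy (k + 1) (by omega)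
    have a2 := hy (k + 2) (by omega)
    have hl : (-1 : ℝ) < m := by linarith
    have hu : (m : ℝ) < 1 := by linarith
    have hl' : -1 < m := by exact_mod_cast hl
    have hu' : m < 1 := by exact_mod_cast hu
    obtain rfl : m = 0 := by omega
    simpa using hm
  have e0 := key 0 (by norm_num)
  have e1 := key 1 (by norm_num)
  norm_num at e0 e1
  linarith [hy 0 (by norm_num), hy 1 (by norm_num), hy 2 (by norm_num), hy 3 (by norm_num)]

/-- Fourteen consecutive terms with second differences `5` modulo `16` cannot all lie in
`[5, 16)`. -/
lemma no_fourteen_high (y : ℕ → ℝ) (hy : ∀ k < 14, 5 ≤ y k ∧ y k < 16)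
    (hd : ∀ k, ∃ m : ℤ, y k - 2 * y (k + 1) + y (k + 2) = 5 + 16 * m) : False := by
  have key (k : ℕ) (hk : k < 12) : y (k + 2) = 2 * y (k + 1) - y k - 11 ∨
      y (k + 2) = 2 * y (k + 1) - y k + 5 ∨ y (k + 2) = 2 * y (k + 1) - y k + 21 := by
    obtain ⟨m, hm⟩ := hd k
    have a0 := hy k (by omega)
    have a1 := hy (k + 1) (by omega)
    have a2 := hy (k + 2) (by omega)
    have hl : (-2 : ℝ) < m := by linarith
    have hu : (m : ℝ) < 2 := by linarith
    have hl' : -2 < m := by exact_mod_cast hl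
    have hu' : m < 2 := by exact_mod_cast hu
    obtain rfl | rfl | rfl : m = -1 ∨ m = 0 ∨ m = 1 := by omega
    · left; push_cast at hm; linarith
    · right; left; push_cast at hm; linarith
    · right; right; push_cast at hm; linarith
  obtain ⟨l0, u0⟩ := hy 0 (by norm_num)
  obtain ⟨l1, u1⟩ := hy 1 (by norm_num)
  obtain ⟨l2, u2⟩ := hy 2 (by norm_num)
  obtain ⟨l3, u3⟩ := hy 3 (by norm_num)
  obtain ⟨l4, u4⟩ := hy 4 (by norm_num)
  obtain ⟨l5, u5⟩ := hy 5 (by norm_num)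
  obtain ⟨l6, u6⟩ := hy 6 (by norm_num)
  obtain ⟨l7, u7⟩ := hy 7 (by norm_num)
  obtain ⟨l8, u8⟩ := hy 8 (by norm_num)
  obtain ⟨l9, u9⟩ := hy 9 (by norm_num)
  obtain ⟨l10, u10⟩ := hy 10 (by norm_num)
  obtain ⟨l11, u11⟩ := hy 11 (by norm_num)
  obtain ⟨l12, u12⟩ := hy 12 (by norm_num)
  obtain ⟨l13, u13⟩ := hy 13 (by norm_num)
  -- Depth-first search over the second differences: after each three-way split, the branches
  -- whose constraints are already infeasible are discarded, so that their number stays below ten.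
  rcases key 0 (by norm_num) with e0 | e0 | e0 <;> norm_num at e0 <;> try linarith
  all_goals rcases key 1 (by norm_num) with e1 | e1 | e1 <;> norm_num at e1 <;> try linarith
  all_goals rcases key 2 (by norm_num) with e2 | e2 | e2 <;> norm_num at e2 <;> try linarith
  all_goals rcases key 3 (by norm_num) with e3 | e3 | e3 <;> norm_num at e3 <;> try linarith
  all_goals rcases key 4 (by norm_num) with e4 | e4 | e4 <;> norm_num at e4 <;> try linarith
  all_goals rcases key 5 (by norm_num) with e5 | e5 | e5 <;> norm_num at e5 <;> try linarith
  all_goals rcases key 6 (by norm_num) with e6 | e6 | e6 <;> norm_num at e6 <;> try linarith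
  all_goals rcases key 7 (by norm_num) with e7 | e7 | e7 <;> norm_num at e7 <;> try linarith
  all_goals rcases key 8 (by norm_num) with e8 | e8 | e8 <;> norm_num at e8 <;> try linarith
  all_goals rcases key 9 (by norm_num) with e9 | e9 | e9 <;> norm_num at e9 <;> try linarith
  all_goals rcases key 10 (by norm_num) with e10 | e10 | e10 <;> norm_num at e10 <;> try linarith
  all_goals rcases key 11 (by norm_num) with e11 | e11 | e11 <;> norm_num at e11 <;> linarith

/-- E^n ↛ (ℓ_4, ℓ_14): there is a red/blue coloring of n-dimensional Euclidean
space with no red congruent copy of ℓ_4 and no blue congruent copy of ℓ_14. -/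
theorem euclidean_not_arrow_l4_l14 (n : ℕ) (hn : 0 < n) :
    ∃ red : EuclideanSpace ℝ (Fin n) → Prop,
      (¬ ∃ (x v : EuclideanSpace ℝ (Fin n)), ‖v‖ = 1 ∧
        ∀ k : ℕ, k < 4 → red (x + (k : ℝ) • v)) ∧
      (¬ ∃ (x v : EuclideanSpace ℝ (Fin n)), ‖v‖ = 1 ∧
        ∀ k : ℕ, k < 14 → ¬ red (x + (k : ℝ) • v)) := by
  refine ⟨fun x => phase x < 5, ?_, ?_⟩
  · rintro ⟨x, v, hv, h⟩
    exact no_four_low (fun k => phase (x + (k : ℝ) • v))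
      (fun k hk => ⟨phase_nonneg _, h k hk⟩) (phase_second_diff x v hv)
  · rintro ⟨x, v, hv, h⟩
    exact no_fourteen_high (fun k => phase (x + (k : ℝ) • v))
      (fun k hk => ⟨not_lt.mp (h k hk), phase_lt _⟩) (phase_second_diff x v hv)
end

section
/- For every positive integer n, there exists a red/blue coloring of n-dimensional Euclidean space E^n that contains no red congruent copy of ℓ_5 and no blue congruent copy of ℓ_8 (i.e., E^n ↛ (ℓ_5, ℓ_8)). -/
/-!
Colour a point `p` red when `⌊‖p‖² / 2⌋` is congruent to `0` or `1` modulo `5`, and blue otherwise.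

Along a line `x + k • v` with `‖v‖ = 1` the numbers `y k = ‖x + k • v‖² / 2` satisfy
`y (k + 1) - y k = b + k`, where `b = ⟪x, v⟫ + 1 / 2` (`half_norm_sq_step`). With `j = ⌊b⌋`, the
floors `⌊y k⌋` therefore increase at step `k` by `j + k` or `j + k + 1` (`floor_step`). So modulo `5`
only finitely many colour patterns are possible: they are determined by the residues of `⌊y 0⌋` and
`j` and by one binary choice per step. Running through them, eight consecutive terms are never all
blue (`not_all_blue`), and there is a single pattern in which five consecutive terms are all red:
the one whose choices are up, up, down, down (`not_all_red`). That one does not come from a real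
sequence: the first two choices force `y 2 - y 0 > 2 * j + 2`, hence `2 * b > 2 * j + 1`, while the
last two force `y 4 - y 2 < 2 * j + 6`, hence `2 * b < 2 * j + 1` (`floor_not_up_up_down_down`).
-/

/-- The red residues modulo `5`. -/
abbrev RedResidue (c : ZMod 5) : Prop := c = 0 ∨ c = 1

set_option synthInstance.maxHeartbeats 400000 in
set_option synthInstance.maxSize 2000 in
/-- The last hypothesis excludes the choices up, up, down, down, the only ones that allow five
consecutive red residues. -/
lemma not_all_red : ∀ j c₀ : ZMod 5, RedResidue c₀ →
    ∀ c₁, (c₁ = c₀ + j ∨ c₁ = c₀ + j + 1) → RedResidue c₁ →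
    ∀ c₂, (c₂ = c₁ + j + 1 ∨ c₂ = c₁ + j + 2) → RedResidue c₂ →
    ∀ c₃, (c₃ = c₂ + j + 2 ∨ c₃ = c₂ + j + 3) → RedResidue c₃ →
    ∀ c₄, (c₄ = c₃ + j + 3 ∨ c₄ = c₃ + j + 4) → RedResidue c₄ →
    ¬ (c₁ = c₀ + j ∨ c₂ = c₁ + j + 1 ∨ c₃ = c₂ + j + 3 ∨ c₄ = c₃ + j + 4) := by
  decide

set_option synthInstance.maxHeartbeats 400000 in
set_option synthInstance.maxSize 2000 in
set_option maxRecDepth 10000 in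
lemma not_all_blue : ∀ j c₀ : ZMod 5, ¬ RedResidue c₀ →
    ∀ c₁, (c₁ = c₀ + j ∨ c₁ = c₀ + j + 1) → ¬ RedResidue c₁ →
    ∀ c₂, (c₂ = c₁ + j + 1 ∨ c₂ = c₁ + j + 2) → ¬ RedResidue c₂ →
    ∀ c₃, (c₃ = c₂ + j + 2 ∨ c₃ = c₂ + j + 3) → ¬ RedResidue c₃ →
    ∀ c₄, (c₄ = c₃ + j + 3 ∨ c₄ = c₃ + j + 4) → ¬ RedResidue c₄ →
    ∀ c₅, (c₅ = c₄ + j + 4 ∨ c₅ = c₄ + j + 5) → ¬ RedResidue c₅ →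
    ∀ c₆, (c₆ = c₅ + j + 5 ∨ c₆ = c₅ + j + 6) → ¬ RedResidue c₆ →
    ∀ c₇, (c₇ = c₆ + j + 6 ∨ c₇ = c₆ + j + 7) → RedResidue c₇ := by
  decide

lemma half_norm_sq_step {n : ℕ} (x v : EuclideanSpace ℝ (Fin n)) (hv : ‖v‖ = 1) (k : ℕ) :
    ‖x + ((k + 1 : ℕ) : ℝ) • v‖ ^ 2 / 2
      = ‖x + (k : ℝ) • v‖ ^ 2 / 2 + ((inner ℝ x v + 1 / 2) + k) := by
  rw [norm_add_sq_real, norm_add_sq_real, inner_smul_right, inner_smul_right, norm_smul, norm_smul,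
    hv, Real.norm_natCast, Real.norm_natCast]
  push_cast
  ring

section

variable {y : ℕ → ℝ} {b : ℝ}

lemma floor_step (hy : ∀ k, y (k + 1) = y k + (b + k)) (k : ℕ) :
    ⌊y (k + 1)⌋ = ⌊y k⌋ + ⌊b⌋ + k ∨ ⌊y (k + 1)⌋ = ⌊y k⌋ + ⌊b⌋ + (k + 1 : ℕ) := by
  have h : y (k + 1) = y k + b + (k : ℕ) := by rw [hy k]; ring
  rw [h, Int.floor_add_natCast]
  have h₁ := Int.le_floor_add (y k) b
  have h₂ := Int.le_floor_add_floor (y k) b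
  omega

lemma floor_not_up_up_down_down (hy : ∀ k, y (k + 1) = y k + (b + k)) :
    ⌊y 1⌋ = ⌊y 0⌋ + ⌊b⌋ ∨ ⌊y 2⌋ = ⌊y 1⌋ + ⌊b⌋ + 1 ∨
      ⌊y 3⌋ = ⌊y 2⌋ + ⌊b⌋ + 3 ∨ ⌊y 4⌋ = ⌊y 3⌋ + ⌊b⌋ + 4 := by
  by_contra! h
  obtain ⟨h₁, h₂, h₃, h₄⟩ := h
  have s₀ := floor_step hy 0
  have s₁ := floor_step hy 1
  have s₂ := floor_step hy 2
  have s₃ := floor_step hy 3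
  norm_num at s₀ s₁ s₂ s₃
  have e₁ : ⌊y 2⌋ = ⌊y 0⌋ + 2 * ⌊b⌋ + 3 := by omega
  have e₂ : ⌊y 4⌋ = ⌊y 2⌋ + 2 * ⌊b⌋ + 5 := by omega
  have r₁ : (⌊y 2⌋ : ℝ) = ⌊y 0⌋ + 2 * ⌊b⌋ + 3 := by exact_mod_cast e₁
  have r₂ : (⌊y 4⌋ : ℝ) = ⌊y 2⌋ + 2 * ⌊b⌋ + 5 := by exact_mod_cast e₂
  have y₁ := hy 0
  have y₂ := hy 1
  have y₃ := hy 2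
  have y₄ := hy 3
  norm_num at y₁ y₂ y₃ y₄
  linarith [Int.lt_floor_add_one (y 0), Int.floor_le (y 2), Int.lt_floor_add_one (y 4)]

lemma floor_step_mod (hy : ∀ k, y (k + 1) = y k + (b + k)) (k : ℕ) :
    ((⌊y (k + 1)⌋ : ℤ) : ZMod 5) = (⌊y k⌋ : ZMod 5) + (⌊b⌋ : ZMod 5) + (k : ZMod 5) ∨
      ((⌊y (k + 1)⌋ : ℤ) : ZMod 5)
        = (⌊y k⌋ : ZMod 5) + (⌊b⌋ : ZMod 5) + ((k + 1 : ℕ) : ZMod 5) := by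
  refine (floor_step hy k).imp (fun h => ?_) (fun h => ?_) <;>
  · rw [h]
    push_cast
    rfl

lemma exists_not_red (hy : ∀ k, y (k + 1) = y k + (b + k)) :
    ¬ ∀ k < 5, RedResidue ((⌊y k⌋ : ℤ) : ZMod 5) := by
  intro h
  have s₀ := floor_step_mod hy 0
  rw [Nat.cast_zero, add_zero, zero_add, Nat.cast_one] at s₀
  have s₁ := floor_step_mod hy 1
  rw [Nat.cast_one] at s₁
  refine not_all_red ⌊b⌋ ⌊y 0⌋ (h 0 (by norm_num)) ⌊y 1⌋ s₀ (h 1 (by norm_num))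
    ⌊y 2⌋ s₁ (h 2 (by norm_num)) ⌊y 3⌋ (floor_step_mod hy 2) (h 3 (by norm_num))
    ⌊y 4⌋ (floor_step_mod hy 3) (h 4 (by norm_num)) ?_
  refine (floor_not_up_up_down_down hy).imp (fun e => ?_)
    (Or.imp (fun e => ?_) (Or.imp (fun e => ?_) (fun e => ?_))) <;>
  · rw [e]
    push_cast
    rfl

lemma exists_red (hy : ∀ k, y (k + 1) = y k + (b + k)) :
    ¬ ∀ k < 8, ¬ RedResidue ((⌊y k⌋ : ℤ) : ZMod 5) := by
  intro h
  have s₀ := floor_step_mod hy 0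
  rw [Nat.cast_zero, add_zero, zero_add, Nat.cast_one] at s₀
  have s₁ := floor_step_mod hy 1
  rw [Nat.cast_one] at s₁
  exact h 7 (by norm_num) <| not_all_blue ⌊b⌋ ⌊y 0⌋ (h 0 (by norm_num))
    ⌊y 1⌋ s₀ (h 1 (by norm_num)) ⌊y 2⌋ s₁ (h 2 (by norm_num))
    ⌊y 3⌋ (floor_step_mod hy 2) (h 3 (by norm_num)) ⌊y 4⌋ (floor_step_mod hy 3) (h 4 (by norm_num))
    ⌊y 5⌋ (floor_step_mod hy 4) (h 5 (by norm_num)) ⌊y 6⌋ (floor_step_mod hy 5) (h 6 (by norm_num))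
    ⌊y 7⌋ (floor_step_mod hy 6)

end

/-- E^n ↛ (ℓ_5, ℓ_8): there is a red/blue coloring of n-dimensional Euclidean
space with no red congruent copy of ℓ_5 and no blue congruent copy of ℓ_8. -/
theorem euclidean_not_arrow_l5_l8 (n : ℕ) (hn : 0 < n) :
    ∃ red : EuclideanSpace ℝ (Fin n) → Prop,
      (¬ ∃ (x v : EuclideanSpace ℝ (Fin n)), ‖v‖ = 1 ∧
        ∀ k : ℕ, k < 5 → red (x + (k : ℝ) • v)) ∧
      (¬ ∃ (x v : EuclideanSpace ℝ (Fin n)), ‖v‖ = 1 ∧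
        ∀ k : ℕ, k < 8 → ¬ red (x + (k : ℝ) • v)) := by
  refine ⟨fun p => RedResidue ((⌊‖p‖ ^ 2 / 2⌋ : ℤ) : ZMod 5), ?_, ?_⟩
  · rintro ⟨x, v, hv, h⟩
    exact exists_not_red (y := fun k => ‖x + (k : ℝ) • v‖ ^ 2 / 2) (half_norm_sq_step x v hv) h
  · rintro ⟨x, v, hv, h⟩
    exact exists_red (y := fun k => ‖x + (k : ℝ) • v‖ ^ 2 / 2) (half_norm_sq_step x v hv) h
end

section
/- For every positive integer n, there exists a coloring of n-dimensional Euclidean space E^n with three colors (red, green, blue) that contains no red congruent copy of ℓ_3, no green congruent copy of ℓ_3, and no blue congruent copy of ℓ_8 (i.e., E^n ↛ (ℓ_3, ℓ_3, ℓ_8)). -/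
/-!
The color of `y` depends only on `⌊2‖y‖²⌋` modulo 10: residues 3, 4 are red (color 0), residues
8, 9 are green (color 1), and the remaining ones, those that are 0, 1 or 2 modulo 5, are blue
(color 2).

For a unit vector `v` one has `2‖x + k v‖² = 2k² + b k + c` with `b`, `c` real, so the integers
`e k = ⌊2‖x + k v‖²⌋` satisfy `e (k + 1) - e k ∈ {D + 4k + 2, D + 4k + 3}` with `D = ⌊b⌋`.

* Red and green: `e 2 - 2 e 1 + e 0 ∈ {3, 4, 5}`, whereas three residues in `{3, 4}` (or in
  `{8, 9}`) make this quantity congruent to one of `-2, …, 2` modulo 10.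
* Blue: modulo 5 the lower candidate `D + 4k + 2` for the step drops by 1 as `k` grows by 1.
  Among the seven steps of `ℓ_8` there are therefore three consecutive ones for which it is
  `3, 2, 1`. Inside the residues `{0, 1, 2}`, a step of 3 or 4 lands in `{0, 1}`; then a step of
  2 or 3 must lead from 0 to 2; then a step of 1 or 2 leaves `{0, 1, 2}`.
-/

/-- The coloring by `⌊2‖y‖²⌋` modulo 10. -/
noncomputable def floorColor {n : ℕ} (y : EuclideanSpace ℝ (Fin n)) : Fin 3 :=
  if ⌊2 * ‖y‖ ^ 2⌋ % 5 < 3 then 2 else if ⌊2 * ‖y‖ ^ 2⌋ % 10 < 5 then 0 else 1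

lemma floorColor_eq_zero {n : ℕ} {y : EuclideanSpace ℝ (Fin n)} (h : floorColor y = 0) :
    ⌊2 * ‖y‖ ^ 2⌋ % 10 = 3 ∨ ⌊2 * ‖y‖ ^ 2⌋ % 10 = 4 := by
  unfold floorColor at h
  split_ifs at h
  · simp at h
  · omega
  · simp at h

lemma floorColor_eq_one {n : ℕ} {y : EuclideanSpace ℝ (Fin n)} (h : floorColor y = 1) :
    ⌊2 * ‖y‖ ^ 2⌋ % 10 = 8 ∨ ⌊2 * ‖y‖ ^ 2⌋ % 10 = 9 := by
  unfold floorColor at h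
  split_ifs at h
  · simp at h
  · simp at h
  · omega

lemma floorColor_eq_two {n : ℕ} {y : EuclideanSpace ℝ (Fin n)} (h : floorColor y = 2) :
    ⌊2 * ‖y‖ ^ 2⌋ % 5 < 3 := by
  unfold floorColor at h
  split_ifs at h
  · assumption
  · simp at h
  · simp at h

/-- Consecutive values of `⌊2‖x + k v‖²⌋` differ by `D + 4k + 2` or `D + 4k + 3`, where `D` does
not depend on `k`. -/
lemma exists_floor_step {n : ℕ} (x v : EuclideanSpace ℝ (Fin n)) (hv : ‖v‖ = 1) :
    ∃ D : ℤ, ∀ k : ℕ,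
      D + 4 * k + 2 ≤
        ⌊2 * ‖x + ((k + 1 : ℕ) : ℝ) • v‖ ^ 2⌋ - ⌊2 * ‖x + (k : ℝ) • v‖ ^ 2⌋ ∧
      ⌊2 * ‖x + ((k + 1 : ℕ) : ℝ) • v‖ ^ 2⌋ - ⌊2 * ‖x + (k : ℝ) • v‖ ^ 2⌋ ≤
        D + 4 * k + 3 := by
  have key : ∀ k : ℕ, 2 * ‖x + (k : ℝ) • v‖ ^ 2 =
      2 * ‖x‖ ^ 2 + 4 * inner ℝ x v * k + 2 * k ^ 2 := by
    intro k
    rw [norm_add_sq_real, inner_smul_right, norm_smul, hv, Real.norm_natCast]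
    ring
  refine ⟨⌊4 * inner ℝ x v⌋, fun k => ?_⟩
  rw [key (k + 1), key k]
  set b : ℝ := 4 * inner ℝ x v
  set p : ℝ := 2 * ‖x‖ ^ 2 + b * ((k + 1 : ℕ) : ℝ) + 2 * ((k + 1 : ℕ) : ℝ) ^ 2 with hp
  set q : ℝ := 2 * ‖x‖ ^ 2 + b * k + 2 * k ^ 2 with hq
  have hpq : p = q + b + 4 * k + 2 := by
    rw [hp, hq]; push_cast; ring
  have h1 := Int.floor_le p
  have h2 := Int.lt_floor_add_one p
  have h3 := Int.floor_le q
  have h4 := Int.lt_floor_add_one q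
  have h5 := Int.floor_le b
  have h6 := Int.lt_floor_add_one b
  have hl : ⌊b⌋ + 4 * (k : ℤ) + 2 + ⌊q⌋ < ⌊p⌋ + 1 := by
    have : ((⌊b⌋ + 4 * (k : ℤ) + 2 + ⌊q⌋ : ℤ) : ℝ) < ((⌊p⌋ + 1 : ℤ) : ℝ) := by
      push_cast; linarith
    exact_mod_cast this
  have hu : ⌊p⌋ < ⌊b⌋ + 4 * (k : ℤ) + 4 + ⌊q⌋ := by
    have : ((⌊p⌋ : ℤ) : ℝ) < ((⌊b⌋ + 4 * (k : ℤ) + 4 + ⌊q⌋ : ℤ) : ℝ) := by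
      push_cast; linarith
    exact_mod_cast this
  constructor <;> omega

/-- Three successive steps, congruent modulo 5 to 3 or 4, to 2 or 3, and to 1 or 2 in this order,
cannot all stay within the residues `{0, 1, 2}`. -/
lemma three_steps_mod_five {D p q r s : ℤ} (hD : D % 5 = 3)
    (hp : p % 5 < 3) (hq : q % 5 < 3) (hr : r % 5 < 3) (hs : s % 5 < 3)
    (h1 : D ≤ q - p ∧ q - p ≤ D + 1) (h2 : D + 4 ≤ r - q ∧ r - q ≤ D + 5)
    (h3 : D + 8 ≤ s - r ∧ s - r ≤ D + 9) : False := by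
  omega

theorem euclidean_not_arrow_l3_l3_l8 (n : ℕ) (hn : 0 < n) :
    ∃ color : EuclideanSpace ℝ (Fin n) → Fin 3,
      (¬ ∃ (x v : EuclideanSpace ℝ (Fin n)), ‖v‖ = 1 ∧
        ∀ k : ℕ, k < 3 → color (x + (k : ℝ) • v) = 0) ∧
      (¬ ∃ (x v : EuclideanSpace ℝ (Fin n)), ‖v‖ = 1 ∧
        ∀ k : ℕ, k < 3 → color (x + (k : ℝ) • v) = 1) ∧
      (¬ ∃ (x v : EuclideanSpace ℝ (Fin n)), ‖v‖ = 1 ∧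
        ∀ k : ℕ, k < 8 → color (x + (k : ℝ) • v) = 2) := by
  refine ⟨floorColor, ?_, ?_, ?_⟩
  · rintro ⟨x, v, hv, h⟩
    obtain ⟨D, hD⟩ := exists_floor_step x v hv
    have e0 := floorColor_eq_zero (h 0 (by norm_num))
    have e1 := floorColor_eq_zero (h 1 (by norm_num))
    have e2 := floorColor_eq_zero (h 2 (by norm_num))
    have s0 := hD 0
    have s1 := hD 1
    simp only [Nat.reduceAdd] at s0 s1
    omega
  · rintro ⟨x, v, hv, h⟩
    obtain ⟨D, hD⟩ := exists_floor_step x v hv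
    have e0 := floorColor_eq_one (h 0 (by norm_num))
    have e1 := floorColor_eq_one (h 1 (by norm_num))
    have e2 := floorColor_eq_one (h 2 (by norm_num))
    have s0 := hD 0
    have s1 := hD 1
    simp only [Nat.reduceAdd] at s0 s1
    omega
  · rintro ⟨x, v, hv, h⟩
    obtain ⟨D, hD⟩ := exists_floor_step x v hv
    have e : ∀ k : ℕ, k < 8 → _ := fun k hk => floorColor_eq_two (h k hk)
    -- the index at which the lower candidate for the step is 3 modulo 5
    obtain ⟨k, hk, hk5⟩ : ∃ k : ℕ, k < 5 ∧ (D + 4 * k + 2) % 5 = 3 :=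
      ⟨((D + 4) % 5).toNat, by omega, by omega⟩
    have s0 := hD k
    have s1 := hD (k + 1)
    have s2 := hD (k + 1 + 1)
    refine three_steps_mod_five hk5 (e k (by omega)) (e (k + 1) (by omega))
      (e (k + 1 + 1) (by omega)) (e (k + 1 + 1 + 1) (by omega))
      ⟨s0.1, by linarith [s0.2]⟩ ?_ ?_
    · constructor <;> push_cast at s1 ⊢ <;> linarith [s1.1, s1.2]
    · constructor <;> push_cast at s2 ⊢ <;> linarith [s2.1, s2.2]
end

section
/- For every positive integer n, there exists a coloring of n-dimensional Euclidean space E^n with three colors (red, green, blue) that contains no red congruent copy of ℓ_3, no green congruent copy of ℓ_4, and no blue congruent copy of ℓ_7 (i.e., E^n ↛ (ℓ_3, ℓ_4, ℓ_7)). -/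
/-!
Color `x` according to the residue of `⌊‖x‖²⌋` modulo `8`: residues `1, 5` get color `0`, residues
`2, 3` get color `1`, and `0, 4, 6, 7` get color `2`.

Along a unit-step progression `x + k • v` the squared norm is `k² + b k + a`, so the linear
combination `s i - 2 s (i + h) + s (i + 2h)` of its values is `2 h²` and `s 0 - s 1 - s 2 + s 3`
is `4`. Passing to integer parts changes such a combination by less than `2`, hence by at most `1`
when both sides are integers. So the residues `r k` of the integer parts satisfy, modulo `8`,
* `r i - 2 r (i + 1) + r (i + 2) ∈ {1, 2, 3}` (`h = 1`),
* `r 0 - 2 r 3 + r 6 ∈ {1, 2, 3}` (`h = 3`, as `18 ≡ 2`),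
* `r 0 - r 1 - r 2 + r 3 ∈ {3, 4, 5}`.

These exclude the three forbidden configurations. In color `0` all residues are `1` modulo `4`, so
the second difference is `0` modulo `4`, contradicting the first condition. In color `1` the second
differences force `r 1 = r 2 = 2` and `r 0 = r 3 = 3`, contradicting the third condition. In color
`2` the second differences leave a handful of 7-term residue sequences, all violating the second
condition.
-/

/-- The color of a residue modulo `8`. -/
def residueColor : ZMod 8 → Fin 3 := ![2, 0, 1, 1, 2, 0, 2, 2]

/-- `t` is within `1` of `c` in the cyclic group `ZMod 8`. -/
def Near (c t : ZMod 8) : Prop := t = c - 1 ∨ t = c ∨ t = c + 1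

instance (c t : ZMod 8) : Decidable (Near c t) := by unfold Near; infer_instance

/-- The residue modulo `8` of the integer part of `t`. -/
noncomputable def floorResidue (t : ℝ) : ZMod 8 := ((⌊t⌋ : ℤ) : ZMod 8)

/-- If a combination `p - q - r + s` of reals is an integer `c`, the same combination of their
integer parts is within `1` of `c`. -/
lemma near_floorResidue {p q r s : ℝ} {c : ℤ} (h : p - q - r + s = c) :
    Near (c : ZMod 8)
      (floorResidue p - floorResidue q - floorResidue r + floorResidue s) := by
  have key : ⌊p⌋ - ⌊q⌋ - ⌊r⌋ + ⌊s⌋ = c - 1 ∨ ⌊p⌋ - ⌊q⌋ - ⌊r⌋ + ⌊s⌋ = c ∨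
      ⌊p⌋ - ⌊q⌋ - ⌊r⌋ + ⌊s⌋ = c + 1 := by
    have h1 : ⌊p⌋ - ⌊q⌋ - ⌊r⌋ + ⌊s⌋ < c + 2 := by
      have : ((⌊p⌋ - ⌊q⌋ - ⌊r⌋ + ⌊s⌋ : ℤ) : ℝ) < ((c + 2 : ℤ) : ℝ) := by
        push_cast
        linarith [Int.floor_le p, Int.floor_le s, Int.lt_floor_add_one q, Int.lt_floor_add_one r]
      exact_mod_cast this
    have h2 : c - 2 < ⌊p⌋ - ⌊q⌋ - ⌊r⌋ + ⌊s⌋ := by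
      have : ((c - 2 : ℤ) : ℝ) < ((⌊p⌋ - ⌊q⌋ - ⌊r⌋ + ⌊s⌋ : ℤ) : ℝ) := by
        push_cast
        linarith [Int.floor_le q, Int.floor_le r, Int.lt_floor_add_one p, Int.lt_floor_add_one s]
      exact_mod_cast this
    omega
  unfold Near floorResidue
  rcases key with h | h | h
  · left; exact_mod_cast congrArg (Int.cast : ℤ → ZMod 8) h
  · right; left; exact_mod_cast congrArg (Int.cast : ℤ → ZMod 8) h
  · right; right; exact_mod_cast congrArg (Int.cast : ℤ → ZMod 8) h

lemma norm_sq_add_smul {n : ℕ} (x v : EuclideanSpace ℝ (Fin n)) (hv : ‖v‖ = 1) (k : ℕ) :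
    ‖x + (k : ℝ) • v‖ ^ 2 = ‖x‖ ^ 2 + 2 * k * inner ℝ x v + (k : ℝ) ^ 2 := by
  rw [norm_add_sq_real, inner_smul_right, norm_smul, hv, mul_one, Real.norm_natCast]
  ring

lemma no_residues_zero : ∀ a b c : ZMod 8,
    residueColor a = 0 → residueColor b = 0 → residueColor c = 0 →
    ¬ Near 2 (a - b - b + c) := by decide

lemma no_residues_one : ∀ a b : ZMod 8, residueColor a = 1 → residueColor b = 1 →
    ∀ c, residueColor c = 1 → Near 2 (a - b - b + c) →
    ∀ d, residueColor d = 1 → Near 2 (b - c - c + d) → ¬ Near 4 (a - b - c + d) := by decide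

set_option maxRecDepth 100000 in
lemma no_residues_two : ∀ a b : ZMod 8, residueColor a = 2 → residueColor b = 2 →
    ∀ c, residueColor c = 2 → Near 2 (a - b - b + c) →
    ∀ d, residueColor d = 2 → Near 2 (b - c - c + d) →
    ∀ e, residueColor e = 2 → Near 2 (c - d - d + e) →
    ∀ f, residueColor f = 2 → Near 2 (d - e - e + f) →
    ∀ g, residueColor g = 2 → Near 2 (e - f - f + g) →
    ¬ Near 2 (a - d - d + g) := by decide

/-- E^n ↛ (ℓ_3, ℓ_4, ℓ_7): there is a 3-coloring (colors 0, 1, 2) of n-dimensional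
Euclidean space with no monochromatic congruent copy of ℓ_3 in color 0,
of ℓ_4 in color 1, and of ℓ_7 in color 2. -/
theorem euclidean_not_arrow_l3_l4_l7 (n : ℕ) (hn : 0 < n) :
    ∃ color : EuclideanSpace ℝ (Fin n) → Fin 3,
      (¬ ∃ (x v : EuclideanSpace ℝ (Fin n)), ‖v‖ = 1 ∧
        ∀ k : ℕ, k < 3 → color (x + (k : ℝ) • v) = 0) ∧
      (¬ ∃ (x v : EuclideanSpace ℝ (Fin n)), ‖v‖ = 1 ∧
        ∀ k : ℕ, k < 4 → color (x + (k : ℝ) • v) = 1) ∧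
      (¬ ∃ (x v : EuclideanSpace ℝ (Fin n)), ‖v‖ = 1 ∧
        ∀ k : ℕ, k < 7 → color (x + (k : ℝ) • v) = 2) := by
  have second (x v : EuclideanSpace ℝ (Fin n)) (hv : ‖v‖ = 1) (i j k : ℕ) (hj : j = i + 1)
      (hk : k = i + 2) :
      Near 2 (floorResidue (‖x + (i : ℝ) • v‖ ^ 2) - floorResidue (‖x + (j : ℝ) • v‖ ^ 2)
        - floorResidue (‖x + (j : ℝ) • v‖ ^ 2) + floorResidue (‖x + (k : ℝ) • v‖ ^ 2)) := by
    subst hj hk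
    refine near_floorResidue (c := 2) ?_
    simp only [norm_sq_add_smul x v hv]
    push_cast
    ring
  refine ⟨fun x => residueColor (floorResidue (‖x‖ ^ 2)), ?_, ?_, ?_⟩
  · rintro ⟨x, v, hv, h⟩
    exact no_residues_zero _ _ _ (h 0 (by norm_num)) (h 1 (by norm_num)) (h 2 (by norm_num))
      (second x v hv 0 1 2 rfl rfl)
  · rintro ⟨x, v, hv, h⟩
    refine no_residues_one _ _ (h 0 (by norm_num)) (h 1 (by norm_num))
      _ (h 2 (by norm_num)) (second x v hv 0 1 2 rfl rfl)
      _ (h 3 (by norm_num)) (second x v hv 1 2 3 rfl rfl)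
      (near_floorResidue (c := 4) ?_)
    simp only [norm_sq_add_smul x v hv]
    push_cast
    ring
  · rintro ⟨x, v, hv, h⟩
    refine no_residues_two _ _ (h 0 (by norm_num)) (h 1 (by norm_num))
      _ (h 2 (by norm_num)) (second x v hv 0 1 2 rfl rfl)
      _ (h 3 (by norm_num)) (second x v hv 1 2 3 rfl rfl)
      _ (h 4 (by norm_num)) (second x v hv 2 3 4 rfl rfl)
      _ (h 5 (by norm_num)) (second x v hv 3 4 5 rfl rfl)
      _ (h 6 (by norm_num)) (second x v hv 4 5 6 rfl rfl) ?_
    -- The ideal value here is `2 * 3 ^ 2 = 18`, which is `2` modulo `8`.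
    have h18 : ((18 : ℤ) : ZMod 8) = 2 := by decide
    rw [← h18]
    refine near_floorResidue ?_
    simp only [norm_sq_add_smul x v hv]
    push_cast
    ring
end

section
/- For every positive integer n, there exists a coloring of n-dimensional Euclidean space E^n with three colors (red, green, blue) that contains no red congruent copy of ℓ_3, no green congruent copy of ℓ_5, and no blue congruent copy of ℓ_5 (i.e., E^n ↛ (ℓ_3, ℓ_5, ℓ_5)). -/
/-!
Colour `x` by the residue of `⌊‖x‖²⌋` modulo `8`: residues `0, 4` get colour `0`, residues
`1, 2, 3` get colour `1`, and residues `5, 6, 7` get colour `2`.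

Along a unit-step progression `x + k • v` the squared norm is a quadratic polynomial in `k` with
second difference exactly `2`, so its integer part has all second differences in `{1, 2, 3}`
(`floor_second_diff`). It remains to see that a sequence of integers with such second differences
has no three consecutive terms in `{0, 4}` modulo `8`, because then the second difference would be
divisible by `4`, and no five consecutive terms in a block of three consecutive residues
(`no_five_in_block`). In the latter case the four first differences lie in `{-2, …, 2}` modulo `8`;
as they increase by at most `3` at each step they cannot jump over the missing residues `3, 4, 5`,
so after subtracting a common multiple of `8` they are four of the five integers `-2, …, 2` in increasing
order. Hence `-2, -1` or `1, 2` occur consecutively, and the sum `∓3` is a difference of two terms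
of the block, which is impossible.
-/

/-- The integer part of the squared norm at `x + k • v`. -/
noncomputable def sqFloor {n : ℕ} (x v : EuclideanSpace ℝ (Fin n)) (k : ℕ) : ℤ :=
  ⌊‖x + (k : ℝ) • v‖ ^ 2⌋

/-- The second differences of `‖x + k • v‖²` equal `2`, and those of its integer part deviate from
them by less than `2`. -/
lemma floor_second_diff {n : ℕ} (x v : EuclideanSpace ℝ (Fin n)) (hv : ‖v‖ = 1) (k : ℕ) :
    1 ≤ sqFloor x v k - 2 * sqFloor x v (k + 1) + sqFloor x v (k + 2) ∧
      sqFloor x v k - 2 * sqFloor x v (k + 1) + sqFloor x v (k + 2) ≤ 3 := by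
  have key : ∀ t : ℝ, ‖x + t • v‖ ^ 2 = ‖x‖ ^ 2 + 2 * t * inner ℝ x v + t ^ 2 := by
    intro t
    rw [norm_add_sq_real, inner_smul_right, norm_smul, hv, mul_one, Real.norm_eq_abs, sq_abs]
    ring
  unfold sqFloor
  have h0 := key (k : ℝ)
  have h1 := key ((k + 1 : ℕ) : ℝ)
  have h2 := key ((k + 2 : ℕ) : ℝ)
  push_cast at h0 h1 h2 ⊢
  set A := ‖x + (k : ℝ) • v‖ ^ 2
  set B := ‖x + ((k : ℝ) + 1) • v‖ ^ 2
  set C := ‖x + ((k : ℝ) + 2) • v‖ ^ 2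
  have hABC : A - 2 * B + C = 2 := by rw [h0, h1, h2]; ring
  have a1 := Int.floor_le A
  have a2 := Int.lt_floor_add_one A
  have b1 := Int.floor_le B
  have b2 := Int.lt_floor_add_one B
  have c1 := Int.floor_le C
  have c2 := Int.lt_floor_add_one C
  have lo : (0 : ℝ) < ((⌊A⌋ - 2 * ⌊B⌋ + ⌊C⌋ : ℤ) : ℝ) := by push_cast; linarith
  have hi : ((⌊A⌋ - 2 * ⌊B⌋ + ⌊C⌋ : ℤ) : ℝ) < (4 : ℤ) := by push_cast; linarith
  have lo' := Int.cast_pos.mp lo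
  have hi' := Int.cast_lt.mp hi
  omega

/-- Five integers with second differences in `{1, 2, 3}` do not all lie in the residues
`1 - c, 2 - c, 3 - c` modulo `8`. -/
lemma no_five_in_block (c : ℤ) (u : ℕ → ℤ)
    (hu : ∀ k, 1 ≤ u k - 2 * u (k + 1) + u (k + 2) ∧ u k - 2 * u (k + 1) + u (k + 2) ≤ 3)
    (hb : ∀ k < 5, 1 ≤ (u k + c) % 8 ∧ (u k + c) % 8 ≤ 3) : False := by
  have s0 := hu 0
  have s1 := hu 1
  have s2 := hu 2
  have b0 := hb 0 (by norm_num)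
  have b1 := hb 1 (by norm_num)
  have b2 := hb 2 (by norm_num)
  have b3 := hb 3 (by norm_num)
  have b4 := hb 4 (by norm_num)
  simp only [Nat.reduceAdd] at s0 s1 s2
  -- Consecutive first differences have the same quotient `m`: there is no residue to land on
  -- between `2` and `6`, and the steps are at most `3`.
  obtain ⟨m, d0, d0'⟩ : ∃ m : ℤ, -2 ≤ u 1 - u 0 - 8 * m ∧ u 1 - u 0 - 8 * m ≤ 2 :=
    ⟨(u 1 + c) / 8 - (u 0 + c) / 8, by omega, by omega⟩
  obtain ⟨m₁, d1, d1'⟩ : ∃ m : ℤ, -2 ≤ u 2 - u 1 - 8 * m ∧ u 2 - u 1 - 8 * m ≤ 2 :=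
    ⟨(u 2 + c) / 8 - (u 1 + c) / 8, by omega, by omega⟩
  obtain ⟨m₂, d2, d2'⟩ : ∃ m : ℤ, -2 ≤ u 3 - u 2 - 8 * m ∧ u 3 - u 2 - 8 * m ≤ 2 :=
    ⟨(u 3 + c) / 8 - (u 2 + c) / 8, by omega, by omega⟩
  obtain ⟨m₃, d3, d3'⟩ : ∃ m : ℤ, -2 ≤ u 4 - u 3 - 8 * m ∧ u 4 - u 3 - 8 * m ≤ 2 :=
    ⟨(u 4 + c) / 8 - (u 3 + c) / 8, by omega, by omega⟩
  obtain rfl : m₁ = m := by omega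
  obtain rfl : m₂ = m₁ := by omega
  obtain rfl : m₃ = m₂ := by omega
  have e : u 2 - u 0 - 16 * m₃ = -3 ∨ u 4 - u 2 - 16 * m₃ = 3 := by omega
  omega

/-- E^n ↛ (ℓ_3, ℓ_5, ℓ_5): there is a 3-coloring (colors 0, 1, 2) of n-dimensional
Euclidean space with no monochromatic congruent copy of ℓ_3 in color 0,
of ℓ_5 in color 1, and of ℓ_5 in color 2. -/
theorem euclidean_not_arrow_l3_l5_l5 (n : ℕ) (hn : 0 < n) :
    ∃ color : EuclideanSpace ℝ (Fin n) → Fin 3,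
      (¬ ∃ (x v : EuclideanSpace ℝ (Fin n)), ‖v‖ = 1 ∧
        ∀ k : ℕ, k < 3 → color (x + (k : ℝ) • v) = 0) ∧
      (¬ ∃ (x v : EuclideanSpace ℝ (Fin n)), ‖v‖ = 1 ∧
        ∀ k : ℕ, k < 5 → color (x + (k : ℝ) • v) = 1) ∧
      (¬ ∃ (x v : EuclideanSpace ℝ (Fin n)), ‖v‖ = 1 ∧
        ∀ k : ℕ, k < 5 → color (x + (k : ℝ) • v) = 2) := by
  let f : ℤ → Fin 3 := fun t => if t % 4 = 0 then 0 else if t % 8 ≤ 3 then 1 else 2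
  have f0 : ∀ t, f t = 0 → t % 4 = 0 := by
    intro t; simp only [f]; split_ifs <;> simp [*]
  have f1 : ∀ t, f t = 1 → 1 ≤ (t + 0) % 8 ∧ (t + 0) % 8 ≤ 3 := by
    intro t; simp only [f]; split_ifs <;> simp; omega
  have f2 : ∀ t, f t = 2 → 1 ≤ (t + 4) % 8 ∧ (t + 4) % 8 ≤ 3 := by
    intro t; simp only [f]; split_ifs <;> simp; omega
  refine ⟨fun x => f ⌊‖x‖ ^ 2⌋, ?_, ?_, ?_⟩
  · rintro ⟨x, v, hv, h⟩
    have s := floor_second_diff x v hv 0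
    have h0 := f0 (sqFloor x v 0) (h 0 (by norm_num))
    have h1 := f0 (sqFloor x v 1) (h 1 (by norm_num))
    have h2 := f0 (sqFloor x v 2) (h 2 (by norm_num))
    simp only [Nat.reduceAdd] at s
    omega
  · rintro ⟨x, v, hv, h⟩
    exact no_five_in_block 0 (sqFloor x v) (floor_second_diff x v hv) fun k hk => f1 _ (h k hk)
  · rintro ⟨x, v, hv, h⟩
    exact no_five_in_block 4 (sqFloor x v) (floor_second_diff x v hv) fun k hk => f2 _ (h k hk)
end

section
/- For every positive real number α and every positive integer n, there exists a red/blue coloring of n-dimensional Euclidean space E^n that contains no red congruent copy of ℓ_3 and no blue congruent copy of αℓ_6889 (i.e., E^n ↛ (ℓ_3, αℓ_6889) holds for all α > 0). -/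
/-!
Colour a point `x` red when the fractional part of `t‖x‖²` is below `1/8`, for a suitable real `t`.

Along a line `x + k v` the quantity `t‖x + k v‖²` is a quadratic in `k` with leading coefficient
`t‖v‖²`. For a copy of `ℓ_3` its second difference is `2t`, while three fractional parts in
`[0, 1/8)` have second difference in `(-1/4, 1/4)`; so there is no red `ℓ_3` as soon as `2t` lies
in `[1/4, 3/4]` modulo `1`.

For the other colour, a quadratic `a + b k + γ k²` with a small `γ > 0` moves slowly modulo `1`
around the `k` where its derivative is close to an integer: there it climbs by a full unit in
steps of size at most `1/8`, hence visits `[0, 1/8)` (`exists_fract_quadratic_lt`). This happens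
within `3 / (4γ)` steps whatever `a` and `b` are. It therefore suffices to find `t` such that
`t d² α²` is congruent modulo `1` to a small `γ`, for some step `d` with `d / γ` not too
large (`exists_parameters`). If `α² ≥ 1/64`, the step `d = 16` makes `t d² α²` run through all
residues modulo `1` as `t` runs through `[1/8, 3/8]`; if `α² < 1/64`, a large enough `t` with
`d = 1` works.
-/

/-- A sequence that starts at `c`, reaches the integer `N = ⌈c⌉`, and has increments less than
`1/8` until then has a term in `[N, N + 1/8)`. Here
`j ↦ c + e j + γ j (j - 1)` has increments `e + 2 γ j`, with `0 ≤ e < 2γ`. -/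
lemma exists_fract_slow_lt (γ c e : ℝ) (hγ : 0 < γ) (hγ' : γ ≤ 1 / 512) (he : 0 ≤ e)
    (he' : e < 2 * γ) :
    ∃ j : ℕ, (j : ℝ) ≤ 1 / (16 * γ) ∧
      Int.fract (c + e * j + γ * (j * (j - 1))) < 1 / 8 := by
  set g : ℕ → ℝ := fun j => c + e * j + γ * (j * (j - 1)) with hg
  set y : ℝ := 1 / (16 * γ) with hy
  have hyγ : γ * y = 1 / 16 := by rw [hy]; field_simp
  have hy32 : 32 ≤ y := by rw [hy, le_div_iff₀ (by positivity)]; linarith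
  set J : ℕ := ⌊y⌋₊ with hJ
  have hJy : (J : ℝ) ≤ y := Nat.floor_le (by linarith)
  have hJy' : y < J + 1 := Nat.lt_floor_add_one y
  -- The climb up to index `J` is at least `(y - 1) (y - 2) γ ≥ 1`.
  have hgJ : (⌈c⌉ : ℝ) ≤ g J := by
    have h1 : (⌈c⌉ : ℝ) < c + 1 := Int.ceil_lt_add_one c
    have h2 : (y - 1) * (y - 2) ≤ J * (J - 1) := by
      apply mul_le_mul <;> linarith
    have h3 : γ * ((y - 1) * (y - 2)) ≤ γ * (J * (J - 1)) := by gcongr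
    have h4 : γ * ((y - 1) * (y - 2)) = y / 16 - 3 / 16 + 2 * γ := by
      linear_combination (y - 3) * hyγ
    have h5 : 0 ≤ e * J := by positivity
    simp only [hg]
    linarith
  have hex : ∃ j : ℕ, (⌈c⌉ : ℝ) ≤ g j := ⟨J, hgJ⟩
  classical
  have hspec := Nat.find_spec hex
  have hle : Nat.find hex ≤ J := Nat.find_min' hex hgJ
  have hmin : ∀ i < Nat.find hex, g i < ⌈c⌉ := fun i hi => by
    simpa using Nat.find_min hex hi
  generalize Nat.find hex = j at *
  refine ⟨j, le_trans (by exact_mod_cast hle) hJy, ?_⟩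
  have hupper : g j < ⌈c⌉ + 1 / 8 := by
    rcases j with _ | i
    · have : c ≤ ⌈c⌉ := Int.le_ceil c
      simp only [hg]
      push_cast
      linarith
    · have h1 := hmin i (Nat.lt_succ_self i)
      have h2 : g (i + 1) = g i + (e + 2 * γ * i) := by
        simp only [hg]; push_cast; ring
      have h3 : ((i : ℝ) + 1) ≤ y := le_trans (by exact_mod_cast hle) hJy
      have h4 : γ * ((i : ℝ) + 1) ≤ γ * y := by gcongr
      rw [h2]
      linarith
  have hfl : ⌊g j⌋ = ⌈c⌉ := by
    rw [Int.floor_eq_iff]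
    exact ⟨hspec, by linarith⟩
  change Int.fract (g j) < 1 / 8
  rw [Int.fract, hfl]
  linarith

/-- A quadratic with small leading coefficient `γ > 0` visits `[0, 1/8)` modulo `1` within
`3 / (4γ)` steps, uniformly in the other coefficients. -/
lemma exists_fract_quadratic_lt (γ a b : ℝ) (hγ : 0 < γ) (hγ' : γ ≤ 1 / 512) :
    ∃ k : ℕ, (k : ℝ) ≤ 3 / (4 * γ) ∧ Int.fract (a + b * k + γ * k ^ 2) < 1 / 8 := by
  -- The increment at `k` is `b + γ + 2γk`; at `k₁` it first passes the integer `n`.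
  set n : ℤ := ⌈b + γ⌉ with hn
  have hn1 : b + γ ≤ n := Int.le_ceil _
  have hn2 : (n : ℝ) < b + γ + 1 := Int.ceil_lt_add_one _
  set z : ℝ := (n - (b + γ)) / (2 * γ) with hz
  have hz0 : 0 ≤ z := div_nonneg (by linarith) (by linarith)
  have hzγ : γ * z = (n - (b + γ)) / 2 := by rw [hz]; field_simp
  set k₁ : ℕ := ⌈z⌉₊ with hk
  have hk1 : z ≤ k₁ := Nat.le_ceil z
  have hk2 : (k₁ : ℝ) < z + 1 := Nat.ceil_lt_add_one hz0
  have h1 : γ * z ≤ γ * k₁ := by gcongr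
  have h2 : γ * k₁ < γ * (z + 1) := by gcongr
  obtain ⟨j, hj, hf⟩ := exists_fract_slow_lt γ (a + b * k₁ + γ * k₁ ^ 2)
    (b + γ + 2 * γ * k₁ - n) hγ hγ' (by linarith) (by linarith)
  refine ⟨k₁ + j, ?_, ?_⟩
  · rw [le_div_iff₀ (by positivity)] at hj ⊢
    push_cast
    linarith
  · have : a + b * ((k₁ + j : ℕ) : ℝ) + γ * ((k₁ + j : ℕ) : ℝ) ^ 2 =
        a + b * k₁ + γ * k₁ ^ 2 + (b + γ + 2 * γ * k₁ - n) * j + γ * (j * (j - 1))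
          + ((n * j : ℤ) : ℝ) := by
      push_cast; ring
    rw [this, Int.fract_add_intCast]
    exact hf

/-- Choice of the scaling `t` of the colouring and of the step `d` of a subprogression, for
`β = α²`: `2t` stays away from the integers, `t d² β` is congruent modulo `1` to a small `γ > 0`,
and the `3 / (4γ)` terms of step `d` fit into a progression of length `6889`. -/
lemma exists_parameters (β : ℝ) (hβ : 0 < β) :
    ∃ (t γ : ℝ) (d : ℕ) (i m : ℤ), 1 / 4 ≤ 2 * t - i ∧ 2 * t - i ≤ 3 / 4 ∧
      0 < γ ∧ γ ≤ 1 / 512 ∧ t * d ^ 2 * β = γ + m ∧ d * (3 / (4 * γ)) ≤ 6888 := by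
  rcases le_or_gt (1 / 64) β with h | h
  · set m : ℤ := ⌈32 * β - 1 / 512⌉ with hm
    have h1 : 32 * β - 1 / 512 ≤ m := Int.le_ceil _
    have h2 : (m : ℝ) < 32 * β - 1 / 512 + 1 := Int.ceil_lt_add_one _
    refine ⟨(1 / 512 + m) / (256 * β), 1 / 512, 16, 0, m, ?_, ?_, by norm_num, le_rfl, ?_,
      by norm_num⟩
    · have : 1 / 8 ≤ (1 / 512 + m) / (256 * β) := by
        rw [le_div_iff₀ (by positivity)]; linarith
      push_cast; linarith
    · have : (1 / 512 + m) / (256 * β) ≤ 3 / 8 := by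
        rw [div_le_iff₀ (by positivity)]; linarith
      push_cast; linarith
    · push_cast; field_simp; norm_num
  · -- `t` is the largest element of `1/8 + ℤ/2` with `t β ≤ 1/512`.
    set T : ℝ := 1 / (512 * β) with hT
    have hTβ : T * β = 1 / 512 := by rw [hT]; field_simp
    have hT8 : 1 / 8 < T := by rw [hT, lt_div_iff₀ (by positivity)]; linarith
    set j : ℤ := ⌊2 * (T - 1 / 8)⌋ with hj
    have h1 : (j : ℝ) ≤ 2 * (T - 1 / 8) := Int.floor_le _
    have h2 : 2 * (T - 1 / 8) < j + 1 := Int.lt_floor_add_one _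
    have h0 : (0 : ℝ) ≤ j := by
      exact_mod_cast Int.floor_nonneg.mpr (by linarith : 0 ≤ 2 * (T - 1 / 8))
    have hlow : T / 5 ≤ 1 / 8 + j / 2 := by linarith
    have hγ1 : (T / 5) * β ≤ (1 / 8 + j / 2) * β := by gcongr
    have hγ2 : (1 / 8 + j / 2) * β ≤ T * β := by gcongr; linarith
    have hpos : 0 < (1 / 8 + (j : ℝ) / 2) * β := by positivity
    refine ⟨1 / 8 + j / 2, (1 / 8 + j / 2) * β, 1, j, 0, by linarith, by linarith, hpos,
      by linarith, by push_cast; ring, ?_⟩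
    rw [Nat.cast_one, one_mul, div_le_iff₀ (by positivity)]
    linarith

/-- For every α > 0 and every positive integer n, E^n ↛ (ℓ_3, αℓ_6889):
there is a red/blue coloring of E^n with no red congruent copy of ℓ_3
and no blue congruent copy of αℓ_6889. -/
theorem euclidean_not_arrow_l3_alpha_l6889 (α : ℝ) (hα : 0 < α) (n : ℕ) (hn : 0 < n) :
    ∃ red : EuclideanSpace ℝ (Fin n) → Prop,
      (¬ ∃ (x v : EuclideanSpace ℝ (Fin n)), ‖v‖ = 1 ∧
        ∀ k : ℕ, k < 3 → red (x + (k : ℝ) • v)) ∧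
      (¬ ∃ (x v : EuclideanSpace ℝ (Fin n)), ‖v‖ = α ∧
        ∀ k : ℕ, k < 6889 → ¬ red (x + (k : ℝ) • v)) := by
  obtain ⟨t, γ, d, i, m, ht1, ht2, hγ, hγ', hm, hd⟩ := exists_parameters (α ^ 2) (by positivity)
  have hnorm : ∀ (x v : EuclideanSpace ℝ (Fin n)) (s : ℝ),
      t * ‖x + s • v‖ ^ 2 = t * ‖x‖ ^ 2 + 2 * t * inner ℝ x v * s + t * ‖v‖ ^ 2 * s ^ 2 := by
    intro x v s
    rw [norm_add_sq_real, inner_smul_right, norm_smul, mul_pow, Real.norm_eq_abs, sq_abs]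
    ring
  refine ⟨fun x => Int.fract (t * ‖x‖ ^ 2) < 1 / 8, ?_, ?_⟩
  · rintro ⟨x, v, hv, hred⟩
    have r0 := hred 0 (by norm_num)
    have r1 := hred 1 (by norm_num)
    have r2 := hred 2 (by norm_num)
    simp only [hnorm, hv] at r0 r1 r2
    push_cast at r0 r1 r2
    generalize hu0 : t * ‖x‖ ^ 2 + 2 * t * inner ℝ x v * 0 + t * 1 ^ 2 * 0 ^ 2 = u0 at r0
    generalize hu1 : t * ‖x‖ ^ 2 + 2 * t * inner ℝ x v * 1 + t * 1 ^ 2 * 1 ^ 2 = u1 at r1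
    generalize hu2 : t * ‖x‖ ^ 2 + 2 * t * inner ℝ x v * 2 + t * 1 ^ 2 * 2 ^ 2 = u2 at r2
    have hsum : u0 - 2 * u1 + u2 = 2 * t := by
      rw [← hu0, ← hu1, ← hu2]; ring
    have p0 := Int.fract_nonneg u0
    have p1 := Int.fract_nonneg u1
    have p2 := Int.fract_nonneg u2
    have q0 := Int.floor_add_fract u0
    have q1 := Int.floor_add_fract u1
    have q2 := Int.floor_add_fract u2
    -- The integer `w` would lie strictly between `0` and `1`.
    set w : ℤ := ⌊u0⌋ - 2 * ⌊u1⌋ + ⌊u2⌋ - i with hw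
    have hwr : (w : ℝ) = ⌊u0⌋ - 2 * ⌊u1⌋ + ⌊u2⌋ - i := by rw [hw]; push_cast; ring
    have w0 : (0 : ℝ) < w := by linarith
    have w1 : (w : ℝ) < 1 := by linarith
    have w0' : 0 < w := by exact_mod_cast w0
    have w1' : w < 1 := by exact_mod_cast w1
    omega
  · rintro ⟨x, v, hv, hblue⟩
    obtain ⟨k, hk, hf⟩ :=
      exists_fract_quadratic_lt γ (t * ‖x‖ ^ 2) (2 * t * inner ℝ x v * d) hγ hγ'
    have hlt : d * k < 6889 := by
      have : (d : ℝ) * k ≤ 6888 := le_trans (by gcongr) hd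
      have : d * k ≤ 6888 := by exact_mod_cast this
      omega
    apply hblue (d * k) hlt
    have : t * ‖x‖ ^ 2 + 2 * t * inner ℝ x v * ((d * k : ℕ) : ℝ)
          + t * α ^ 2 * ((d * k : ℕ) : ℝ) ^ 2
        = t * ‖x‖ ^ 2 + 2 * t * inner ℝ x v * d * k + γ * k ^ 2 + ((m * k ^ 2 : ℤ) : ℝ) := by
      push_cast
      linear_combination (k : ℝ) ^ 2 * hm
    rw [hnorm, hv, this, Int.fract_add_intCast]
    exact hf
end

section
/- Let x, y, z ∈ E^n form a congruent copy of ℓ_3, i.e., x + z = 2y and ‖x − y‖ = 1, and let d be a positive integer. Then ⌊d‖x‖²⌋ − 2⌊d‖y‖²⌋ + ⌊d‖z‖²⌋ ∈ {2d − 1, 2d, 2d + 1}. -/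
/-! By the parallelogram law, `d‖x‖² - 2d‖y‖² + d‖z‖² = 2d`. Replacing each term by its floor
changes the left side by `{d‖x‖²} - 2{d‖y‖²} + {d‖z‖²}`, which lies strictly between `-2` and `2`;
the resulting integer therefore differs from `2d` by at most `1`. -/

/-- If x, y, z ∈ E^n form a congruent copy of ℓ_3 and d is a positive integer,
then ⌊d‖x‖²⌋ − 2⌊d‖y‖²⌋ + ⌊d‖z‖²⌋ ∈ {2d − 1, 2d, 2d + 1}. -/
theorem floor_sum_of_ell3 (n : ℕ) (d : ℕ) (hd : 0 < d)
    (x y z : EuclideanSpace ℝ (Fin n))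
    (hmid : x + z = (2 : ℝ) • y) (hdist : ‖x - y‖ = 1) :
    ⌊(d : ℝ) * ‖x‖ ^ 2⌋ - 2 * ⌊(d : ℝ) * ‖y‖ ^ 2⌋ + ⌊(d : ℝ) * ‖z‖ ^ 2⌋ ∈
      ({2 * (d : ℤ) - 1, 2 * (d : ℤ), 2 * (d : ℤ) + 1} : Set ℤ) := by
  -- The parallelogram law for `y` and `x - y` gives `‖x‖² + ‖z‖² = 2‖y‖² + 2`.
  have hz : z = y - (x - y) := by
    rw [eq_sub_of_add_eq' hmid, two_smul]
    abel
  have hpar := parallelogram_law_with_norm ℝ y (x - y)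
  rw [← hz, add_sub_cancel, hdist] at hpar
  have hsum : (d : ℝ) * ‖x‖ ^ 2 + d * ‖z‖ ^ 2 = 2 * (d * ‖y‖ ^ 2) + 2 * d := by
    linear_combination (d : ℝ) * hpar
  generalize (d : ℝ) * ‖x‖ ^ 2 = a at *
  generalize (d : ℝ) * ‖y‖ ^ 2 = b at *
  generalize (d : ℝ) * ‖z‖ ^ 2 = c at *
  -- The fractional parts satisfy `-2 < {a} - 2{b} + {c} < 2`, so the integer lies strictly
  -- between `2d - 2` and `2d + 2`.
  have ha := Int.floor_le a
  have ha' := Int.lt_floor_add_one a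
  have hb := Int.floor_le b
  have hb' := Int.lt_floor_add_one b
  have hc := Int.floor_le c
  have hc' := Int.lt_floor_add_one c
  have hlo : 2 * (d : ℤ) - 2 < ⌊a⌋ - 2 * ⌊b⌋ + ⌊c⌋ := by
    have : 2 * (d : ℝ) - 2 < ⌊a⌋ - 2 * ⌊b⌋ + ⌊c⌋ := by linarith
    exact_mod_cast this
  have hhi : ⌊a⌋ - 2 * ⌊b⌋ + ⌊c⌋ < 2 * (d : ℤ) + 2 := by
    have : (⌊a⌋ : ℝ) - 2 * ⌊b⌋ + ⌊c⌋ < 2 * (d : ℝ) + 2 := by linarith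
    exact_mod_cast this
  simp only [Set.mem_insert_iff, Set.mem_singleton_iff]
  omega
end

section
/- Let p and d be positive integers, let S be a subset of {0, 1, …, p−1}, and let N be a positive integer. Then the following two statements are equivalent. (1) For all real numbers b and c, there exists an integer k with 0 ≤ k ≤ N such that ⌊d(k² + bk + c)⌋ mod p ∈ S. (2) For each positive integer m ≤ 2N+1 and all integers b_0, c_0 with 0 ≤ b_0 ≤ mp and 0 ≤ c_0 ≤ mp, defining for i ∈ {0,1} the sets K_i = {k : 0 ≤ k ≤ N and ⌊dk² + (b_0/m)k + (c_0 − i)/m⌋ mod p ∈ S}, both K_0 and K_1 are nonempty, the smallest element of K_0 is at most the largest element of K_1, and the smallest element of K_1 is at most the largest element of K_0. -/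
/-!
Put `β = d b`, `γ = d c`, so that the first condition says that the set `goodSet β γ` of admissible
`k ≤ N` is nonempty for all real `β, γ`. If `m (β k + γ)` lies in `[n, n + 1)` for an integer `n`,
then `⌊β k + γ⌋ = ⌊n / m⌋`; hence if the line `m (β k + γ)` stays within distance `1` of the integer
line `b₀ k + c₀` on `[0, N]`, then `goodSet β γ` agrees with `K₀` at those `k` where the former line
is on or above the latter, and with `K₁` where it is below. The difference of the two lines is
affine in `k`, so it changes sign at most once.

* If the condition on minima and maxima fails for some `m, b₀, c₀`, tilting the line
  `(b₀ k + c₀) / m` slightly about a suitable point gives `β, γ` with `goodSet β γ` empty.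
* Conversely, let `β, γ` be given; by periodicity they may be taken in `[0, p)`. Dirichlet's
  approximation theorem gives `m ≤ 2 N + 1` with `|m β - b₀| ≤ 1 / (2 N + 2)`, and with `c₀` the
  nearest integer to `m γ` the two lines differ by at most `1 / 2 + N / (2 N + 2) < 1`. If
  `goodSet β γ` were empty, the difference would be negative on `K₀` and nonnegative on `K₁`; the
  two inequalities between minima and maxima then force its slope to be both positive and negative.
-/

/-- The `k ≤ N` such that the residue of `⌊d k² + β k + γ⌋` modulo `p` lies in `S`. -/
def goodSet (p d N : ℕ) (S : Finset ℕ) (β γ : ℝ) : Set ℕ :=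
  {k : ℕ | k ≤ N ∧ ∃ s ∈ S, ⌊(d : ℝ) * (k : ℝ) ^ 2 + β * k + γ⌋ % (p : ℤ) = (s : ℤ)}

lemma floor_eq_floor_div {m : ℕ} (hm : 1 ≤ m) (n : ℤ) (y : ℝ) (h1 : (n : ℝ) ≤ m * y)
    (h2 : (m : ℝ) * y < n + 1) : ⌊y⌋ = ⌊(n : ℝ) / m⌋ := by
  have hm0 : (0 : ℝ) < m := by exact_mod_cast hm
  apply le_antisymm
  · rw [Int.le_floor, le_div_iff₀ hm0]
    have h3 : ((⌊y⌋ * m : ℤ) : ℝ) < ((n + 1 : ℤ) : ℝ) := by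
      push_cast
      nlinarith [Int.floor_le y]
    have h4 : ⌊y⌋ * m ≤ n := Int.lt_add_one_iff.mp (by exact_mod_cast h3)
    exact_mod_cast h4
  · apply Int.floor_le_floor
    rw [div_le_iff₀ hm0]
    linarith

/-- At a point `k` where `m (β k + γ)` has integer part `b₀ k + c₁`, the real line `β k + γ` may be
replaced by the rational line `(b₀ k + c₁) / m`. -/
lemma mem_goodSet_iff (p d N : ℕ) (S : Finset ℕ) {m : ℕ} (hm : 1 ≤ m) (b₀ c₁ : ℤ) (β γ : ℝ) (k : ℕ)
    (h1 : (b₀ : ℝ) * k + c₁ ≤ m * (β * k + γ)) (h2 : m * (β * k + γ) < (b₀ : ℝ) * k + c₁ + 1) :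
    k ∈ goodSet p d N S β γ ↔ k ∈ goodSet p d N S ((b₀ : ℝ) / m) ((c₁ : ℝ) / m) := by
  have hm0 : (m : ℝ) ≠ 0 := by positivity
  have h := floor_eq_floor_div hm (m * d * k ^ 2 + b₀ * k + c₁)
    ((d : ℝ) * (k : ℝ) ^ 2 + β * k + γ) (by push_cast; linarith) (by push_cast; linarith)
  have e : ((m * d * k ^ 2 + b₀ * k + c₁ : ℤ) : ℝ) / m
      = (d : ℝ) * (k : ℝ) ^ 2 + ((b₀ : ℝ) / m) * k + (c₁ : ℝ) / m := by
    push_cast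
    field_simp
  rw [e] at h
  simp only [goodSet, Set.mem_ofPred_eq, h]

lemma goodSet_periodic (p d N : ℕ) (S : Finset ℕ) (β γ : ℝ) (u v : ℤ) :
    goodSet p d N S (β - p * u) (γ - p * v) = goodSet p d N S β γ := by
  ext k
  have e : (d : ℝ) * (k : ℝ) ^ 2 + (β - p * u) * k + (γ - p * v)
      = (d : ℝ) * (k : ℝ) ^ 2 + β * k + γ - ((p * (u * k + v) : ℤ) : ℝ) := by
    push_cast
    ring
  simp only [goodSet, Set.mem_ofPred_eq, e, Int.floor_sub_intCast, Int.sub_mul_emod_self_left]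

lemma bddAbove_goodSet (p d N : ℕ) (S : Finset ℕ) (β γ : ℝ) : BddAbove (goodSet p d N S β γ) :=
  ⟨N, fun _ hk => hk.1⟩

lemma exists_reduced {p : ℕ} (hp : 0 < p) (x : ℝ) : ∃ u : ℤ, 0 ≤ x - p * u ∧ x - p * u ≤ p := by
  have hp0 : (0 : ℝ) < p := by exact_mod_cast hp
  refine ⟨⌊x / p⌋, ?_, ?_⟩
  · have h := Int.floor_le (x / p)
    rw [le_div_iff₀ hp0] at h
    linarith
  · have h := Int.lt_floor_add_one (x / p)
    rw [div_lt_iff₀ hp0] at h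
    linarith

lemma round_mem_range (m p : ℕ) (x : ℝ) (h0 : 0 ≤ x) (h1 : x ≤ p) :
    0 ≤ round (m * x) ∧ round (m * x) ≤ m * p := by
  have h := abs_le.mp (abs_sub_round ((m : ℝ) * x))
  have hm : (0 : ℝ) ≤ m := by positivity
  have h2 : (m : ℝ) * x ≤ m * p := mul_le_mul_of_nonneg_left h1 hm
  have h3 : 0 ≤ (m : ℝ) * x := mul_nonneg hm h0
  constructor
  · have : ((-1 : ℤ) : ℝ) < round ((m : ℝ) * x) := by push_cast; linarith
    have : -1 < round ((m : ℝ) * x) := by exact_mod_cast this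
    omega
  · have : (round ((m : ℝ) * x) : ℝ) < ((m * p + 1 : ℤ) : ℝ) := by push_cast; linarith
    have : round ((m : ℝ) * x) < m * p + 1 := by exact_mod_cast this
    omega

/-- Tilting the line `(b₀ k + c₀) / m` by a small slope of sign `σ`, about a point `τ`: nonemptiness
of the good set of the tilted line yields an element of `K₀` on the side where the tilt is upwards,
or an element of `K₁` on the other side. -/
lemma exists_of_tilt (p d N : ℕ) (S : Finset ℕ) (h : ∀ β γ : ℝ, (goodSet p d N S β γ).Nonempty)
    {m : ℕ} (hm : 1 ≤ m) (b₀ c₀ : ℤ) (σ τ : ℝ)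
    (hσ : ∀ k : ℕ, k ≤ N → |σ * (k - τ)| ≤ N + 1) :
    ∃ k : ℕ, (0 ≤ σ * (k - τ) ∧ k ∈ goodSet p d N S ((b₀ : ℝ) / m) ((c₀ : ℝ) / m)) ∨
      (σ * (k - τ) < 0 ∧ k ∈ goodSet p d N S ((b₀ : ℝ) / m) (((c₀ : ℝ) - 1) / m)) := by
  have hm0 : (0 : ℝ) < m := by exact_mod_cast hm
  have hN0 : (0 : ℝ) < N + 2 := by positivity
  obtain ⟨k, hk⟩ := h ((b₀ + σ / (N + 2)) / m) ((c₀ - σ * τ / (N + 2)) / m)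
  have e : (m : ℝ) * ((b₀ + σ / (N + 2)) / m * k + (c₀ - σ * τ / (N + 2)) / m)
      = b₀ * k + c₀ + σ * (k - τ) / (N + 2) := by
    field_simp
    ring
  have hb := abs_le.mp (hσ k hk.1)
  have hlt : σ * (k - τ) / (N + 2) < 1 := by
    rw [div_lt_one hN0]
    linarith
  have hgt : -1 < σ * (k - τ) / (N + 2) := by
    rw [lt_div_iff₀ hN0]
    linarith
  refine ⟨k, ?_⟩
  rcases le_or_gt 0 (σ * (k - τ)) with hs | hs
  · have hs' : 0 ≤ σ * (k - τ) / (N + 2) := by positivity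
    exact Or.inl ⟨hs, (mem_goodSet_iff p d N S hm b₀ c₀ _ _ k
      (by rw [e]; linarith) (by rw [e]; linarith)).mp hk⟩
  · have hs' : σ * (k - τ) / (N + 2) < 0 := div_neg_of_neg_of_pos hs hN0
    have hk' := (mem_goodSet_iff p d N S hm b₀ (c₀ - 1) _ _ k
      (by rw [e]; push_cast; linarith) (by rw [e]; push_cast; linarith)).mp hk
    push_cast at hk'
    exact Or.inr ⟨hs, hk'⟩

lemma minmax_of_forall_nonempty (p d N : ℕ) (S : Finset ℕ)
    (h : ∀ β γ : ℝ, (goodSet p d N S β γ).Nonempty) {m : ℕ} (hm : 1 ≤ m) (b₀ c₀ : ℤ) :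
    sInf (goodSet p d N S ((b₀ : ℝ) / m) ((c₀ : ℝ) / m))
        ≤ sSup (goodSet p d N S ((b₀ : ℝ) / m) (((c₀ : ℝ) - 1) / m)) ∧
      sInf (goodSet p d N S ((b₀ : ℝ) / m) (((c₀ : ℝ) - 1) / m))
        ≤ sSup (goodSet p d N S ((b₀ : ℝ) / m) ((c₀ : ℝ) / m)) := by
  have hn0 := h ((b₀ : ℝ) / m) ((c₀ : ℝ) / m)
  have hn1 := h ((b₀ : ℝ) / m) (((c₀ : ℝ) - 1) / m)
  have hb0 := bddAbove_goodSet p d N S ((b₀ : ℝ) / m) ((c₀ : ℝ) / m)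
  have hb1 := bddAbove_goodSet p d N S ((b₀ : ℝ) / m) (((c₀ : ℝ) - 1) / m)
  have key := exists_of_tilt p d N S h hm b₀ c₀
  have hN0 := (Nat.sInf_mem hn0).1
  have hN1 := (Nat.sInf_mem hn1).1
  generalize goodSet p d N S ((b₀ : ℝ) / m) ((c₀ : ℝ) / m) = A at *
  generalize goodSet p d N S ((b₀ : ℝ) / m) (((c₀ : ℝ) - 1) / m) = B at *
  have hN0' : ((sInf A : ℕ) : ℝ) ≤ N := by exact_mod_cast hN0
  have hN1' : ((sInf B : ℕ) : ℝ) ≤ N := by exact_mod_cast hN1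
  have p0 : (0 : ℝ) ≤ (sInf A : ℕ) := Nat.cast_nonneg _
  have p1 : (0 : ℝ) ≤ (sInf B : ℕ) := Nat.cast_nonneg _
  constructor
  · by_contra! hlt
    -- Downward tilt about `min K₀ - 1`: nonnegative difference exactly for `k < min K₀`.
    obtain ⟨k, ⟨hs, hk⟩ | ⟨hs, hk⟩⟩ := key (-1) ((sInf A : ℕ) - 1) (by
      intro k hk
      have hk' : (k : ℝ) ≤ N := by exact_mod_cast hk
      have hk0 : (0 : ℝ) ≤ k := Nat.cast_nonneg _
      rw [abs_le]
      constructor <;> linarith)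
    · have h1 : ((sInf A : ℕ) : ℝ) ≤ k := by exact_mod_cast Nat.sInf_le hk
      linarith
    · have h1 : k < sInf A := lt_of_le_of_lt (le_csSup hb1 hk) hlt
      have h2 : (k : ℝ) + 1 ≤ (sInf A : ℕ) := by exact_mod_cast h1
      linarith
  · by_contra! hlt
    -- Upward tilt about `min K₁`: nonnegative difference exactly for `k ≥ min K₁`.
    obtain ⟨k, ⟨hs, hk⟩ | ⟨hs, hk⟩⟩ := key 1 (sInf B : ℕ) (by
      intro k hk
      have hk' : (k : ℝ) ≤ N := by exact_mod_cast hk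
      have hk0 : (0 : ℝ) ≤ k := Nat.cast_nonneg _
      rw [abs_le]
      constructor <;> linarith)
    · have h1 : k < sInf B := lt_of_le_of_lt (le_csSup hb0 hk) hlt
      have h2 : (k : ℝ) < (sInf B : ℕ) := by exact_mod_cast h1
      linarith
    · have h1 : ((sInf B : ℕ) : ℝ) ≤ k := by exact_mod_cast Nat.sInf_le hk
      linarith

/-- A line `β k + γ` that is close enough to `(b₀ k + c₀) / m` on `[0, N]` has a nonempty good set,
provided `K₀` and `K₁` satisfy the condition on minima and maxima. -/
lemma nonempty_of_minmax (p d N : ℕ) (S : Finset ℕ) {m : ℕ} (hm : 1 ≤ m) (b₀ c₀ : ℤ) (β γ : ℝ)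
    (hclose : ∀ k : ℕ, k ≤ N → |(m * β - b₀) * k + (m * γ - c₀)| < 1)
    (hn0 : (goodSet p d N S ((b₀ : ℝ) / m) ((c₀ : ℝ) / m)).Nonempty)
    (hn1 : (goodSet p d N S ((b₀ : ℝ) / m) (((c₀ : ℝ) - 1) / m)).Nonempty)
    (h01 : sInf (goodSet p d N S ((b₀ : ℝ) / m) ((c₀ : ℝ) / m))
        ≤ sSup (goodSet p d N S ((b₀ : ℝ) / m) (((c₀ : ℝ) - 1) / m)))
    (h10 : sInf (goodSet p d N S ((b₀ : ℝ) / m) (((c₀ : ℝ) - 1) / m))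
        ≤ sSup (goodSet p d N S ((b₀ : ℝ) / m) ((c₀ : ℝ) / m))) :
    (goodSet p d N S β γ).Nonempty := by
  by_contra hne
  have hempty : ∀ k, k ∉ goodSet p d N S β γ := fun k hk => hne ⟨k, hk⟩
  have neg_of_mem : ∀ k ∈ goodSet p d N S ((b₀ : ℝ) / m) ((c₀ : ℝ) / m),
      (m * β - b₀) * k + (m * γ - c₀) < 0 := by
    intro k hk
    by_contra! hs
    have hc := abs_lt.mp (hclose k hk.1)
    exact hempty k ((mem_goodSet_iff p d N S hm b₀ c₀ β γ k (by linarith) (by linarith)).mpr hk)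
  have nonneg_of_mem : ∀ k ∈ goodSet p d N S ((b₀ : ℝ) / m) (((c₀ : ℝ) - 1) / m),
      0 ≤ (m * β - b₀) * k + (m * γ - c₀) := by
    intro k hk
    by_contra! hs
    have hc := abs_lt.mp (hclose k hk.1)
    refine hempty k ((mem_goodSet_iff p d N S hm b₀ (c₀ - 1) β γ k
      (by push_cast; linarith) (by push_cast; linarith)).mpr ?_)
    push_cast
    exact hk
  have i0 := neg_of_mem _ (Nat.sInf_mem hn0)
  have s0 := neg_of_mem _ (Nat.sSup_mem hn0 (bddAbove_goodSet ..))
  have i1 := nonneg_of_mem _ (Nat.sInf_mem hn1)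
  have s1 := nonneg_of_mem _ (Nat.sSup_mem hn1 (bddAbove_goodSet ..))
  have h01' := (Nat.cast_le (α := ℝ)).mpr h01
  have h10' := (Nat.cast_le (α := ℝ)).mpr h10
  rcases le_total 0 ((m : ℝ) * β - b₀) with hδ | hδ
  · have := mul_le_mul_of_nonneg_left h10' hδ
    linarith
  · have := mul_le_mul_of_nonpos_left h01' hδ
    linarith


/-- Proposition: Let p, d be positive integers, S ⊆ {0, …, p−1}, and N a positive
integer. Then (1) for all real b, c there is 0 ≤ k ≤ N with
⌊d(k² + bk + c)⌋ mod p ∈ S, if and only if (2) for every positive integer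
m ≤ 2N+1 and all integers 0 ≤ b₀ ≤ mp and 0 ≤ c₀ ≤ mp, the sets
K_i = {0 ≤ k ≤ N : ⌊dk² + (b₀/m)k + (c₀−i)/m⌋ mod p ∈ S} (i = 0, 1) are
nonempty, and the smallest element of each K_i is at most the largest element
of the other. -/
theorem checking_equivalence (p d N : ℕ) (hp : 0 < p) (hd : 0 < d) (hN : 0 < N)
    (S : Finset ℕ) (hS : ∀ s ∈ S, s < p) :
    (∀ b c : ℝ, ∃ k : ℕ, k ≤ N ∧
        ∃ s ∈ S, ⌊(d : ℝ) * ((k : ℝ) ^ 2 + b * k + c)⌋ % (p : ℤ) = (s : ℤ))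
    ↔
    (∀ m : ℕ, 1 ≤ m → m ≤ 2 * N + 1 →
      ∀ b₀ c₀ : ℤ, 0 ≤ b₀ → b₀ ≤ m * p → 0 ≤ c₀ → c₀ ≤ m * p →
      ∀ K : Fin 2 → Set ℕ,
        K = (fun (i : Fin 2) => {k : ℕ | k ≤ N ∧ ∃ s ∈ S,
          ⌊(d : ℝ) * (k : ℝ) ^ 2 + ((b₀ : ℝ) / m) * k + ((c₀ : ℝ) - (i.val : ℝ)) / m⌋
            % (p : ℤ) = (s : ℤ)}) →
        (K 0).Nonempty ∧ (K 1).Nonempty ∧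
        sInf (K 0) ≤ sSup (K 1) ∧ sInf (K 1) ≤ sSup (K 0)) := by
  have hd0 : (d : ℝ) ≠ 0 := by positivity
  constructor
  · intro h m hm _ b₀ c₀ _ _ _ _ K hK
    have h' : ∀ β γ : ℝ, (goodSet p d N S β γ).Nonempty := by
      intro β γ
      obtain ⟨k, hk, s, hs, e⟩ := h (β / d) (γ / d)
      refine ⟨k, hk, s, hs, ?_⟩
      rw [← e]
      congr 2
      field_simp
    have hK0 : K 0 = goodSet p d N S ((b₀ : ℝ) / m) ((c₀ : ℝ) / m) := by
      simp [hK, goodSet]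
    have hK1 : K 1 = goodSet p d N S ((b₀ : ℝ) / m) (((c₀ : ℝ) - 1) / m) := by
      simp [hK, goodSet]
    rw [hK0, hK1]
    exact ⟨h' _ _, h' _ _, minmax_of_forall_nonempty p d N S h' hm b₀ c₀⟩
  · intro h b c
    suffices hne : (goodSet p d N S (d * b) (d * c)).Nonempty by
      obtain ⟨k, hk, s, hs, e⟩ := hne
      refine ⟨k, hk, s, hs, ?_⟩
      rw [← e]
      congr 2
      ring
    obtain ⟨u, hu0, hu1⟩ := exists_reduced hp (d * b)
    obtain ⟨v, hv0, hv1⟩ := exists_reduced hp (d * c)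
    rw [← goodSet_periodic p d N S _ _ u v]
    generalize (d : ℝ) * b - p * u = β at *
    generalize (d : ℝ) * c - p * v = γ at *
    obtain ⟨m, hm, hmN, hβ⟩ := Real.exists_nat_abs_mul_sub_round_le β (n := 2 * N + 1) (by omega)
    have hγ := abs_sub_round ((m : ℝ) * γ)
    obtain ⟨hb0, hb1⟩ := round_mem_range m p β hu0 hu1
    obtain ⟨hc0, hc1⟩ := round_mem_range m p γ hv0 hv1
    obtain ⟨n0, n1, h01, h10⟩ := h m hm hmN _ _ hb0 hb1 hc0 hc1 _ rfl
    simp only [Fin.val_zero, Fin.val_one, Nat.cast_zero, Nat.cast_one, sub_zero] at n0 n1 h01 h10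
    refine nonempty_of_minmax p d N S hm _ _ β γ ?_ n0 n1 h01 h10
    intro k hk
    have hk' : (k : ℝ) ≤ N := by exact_mod_cast hk
    have hk0 : (0 : ℝ) ≤ k := Nat.cast_nonneg _
    have h1 : |(m * β - round (m * β)) * (k : ℝ)| < 1 / 2 := by
      rw [abs_mul, abs_of_nonneg hk0]
      calc _ ≤ 1 / (((2 * N + 1 : ℕ) : ℝ) + 1) * N := by gcongr
        _ < 1 / 2 := by
          push_cast
          rw [div_mul_eq_mul_div, div_lt_div_iff₀ (by positivity) (by positivity)]
          linarith
    exact lt_of_le_of_lt (abs_add_le _ _) (by linarith)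
end

section
/- For every positive integer n, there exists a red/blue coloring of n-dimensional Euclidean space E^n such that there are no four red points x_1, x_2, x_3, x_4 with x_1 + x_2 = x_3 + x_4 and (‖x_1 − x_2‖² − ‖x_3 − x_4‖²)/2 = 1, and there is no blue congruent copy of ℓ_18 (i.e., E^n ↛ (P_1, ℓ_18)). -/
/-!
The parallelogram law turns a red member of `P_1` into four numbers of the form `‖x‖²` with
`a + b - c - d = 1`, and along a copy of `ℓ_18` the number `‖x‖²` is a monic quadratic polynomial
in `k`.  So it is enough to colour by `‖x‖²`: a point is red when
`Int.fract (θ * ‖x‖ ^ 2) < θ / 2`, where `θ = 61 / 125`.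

If `a, b, c, d` all have fractional part of `θ * _` in `[0, θ / 2)`, then `θ (a + b - c - d)` is
within less than `θ` of an integer; since `θ < 1 / 2`, the number `θ` itself is not
(`no_unit_combination`).

It remains to see that for all real `A`, `B` one of the values `θ k² + B k + A`, `k < 18`, has
fractional part below `θ / 2` (`exists_fract_lt`).  Suppose none has, and write `g k` for the
integer part.  Whenever an integer `m` satisfies
`m ≤ θ / 2 + θ (k² - l²) + B (k - l)`, it follows that `m + g l ≤ g k`.  For `B` in a short
interval, the best such `m` for each pair `(k, l)` is `shift`, and a closed walk on `{0, …, 17}` of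
positive total shift contradicts the existence of `g`.  As `B` matters only modulo `1`, finitely
many intervals suffice, and `walks` lists one closed walk for each of them.  The choice of `θ` is
numerical: slightly below `1 / 2`, every gap on the circle left by the 18 values is shorter than
`θ / 2`.
-/

/-- The largest integer `m` with `m ≤ θ / 2 + θ (k² - l²) + B (k - l)` for all
`B ∈ [lo / 1000, hi / 1000]`, where `θ = 488 / 1000`; by linearity in `B` the two endpoints
decide. -/
def shift (lo hi : ℤ) (k l : ℕ) : ℤ :=
  min ((244 - 488 * ((l : ℤ) ^ 2 - (k : ℤ) ^ 2) - ((l : ℤ) - k) * lo) / 1000)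
    ((244 - 488 * ((l : ℤ) ^ 2 - (k : ℤ) ^ 2) - ((l : ℤ) - k) * hi) / 1000)

/-- The total shift of the walk that starts at `k` and then visits the entries of the list. -/
def walkShift (lo hi : ℤ) : ℕ → List ℕ → ℤ
  | _, [] => 0
  | k, l :: t => shift lo hi k l + walkShift lo hi l t

/-- `covers lo L`: the intervals with successive endpoints `lo` and the first components of `L`
reach `1000`, and for each of them the walk `(k, t)` in `L`, closed up by returning to `k`, stays
in `{0, …, 17}` and has positive total shift. -/
def covers : ℤ → List (ℤ × ℕ × List ℕ) → Bool
  | lo, [] => decide (1000 ≤ lo)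
  | lo, (hi, k, t) :: r =>
    decide (k < 18) && t.all (fun l => decide (l < 18)) &&
      decide (1 ≤ walkShift lo hi k (t ++ [k])) && covers hi r

/-- Right endpoints (in thousandths) of consecutive intervals for `B`, each with a closed walk of
positive total shift. -/
def walks : List (ℤ × ℕ × List ℕ) :=
  [(44, 12, [13, 14, 15, 16, 17]),
   (75, 6, [9, 13, 10, 14, 15, 16]),
   (99, 4, [9, 7, 10, 14, 11]),
   (123, 5, [10, 8, 11, 15, 12]),
   (147, 6, [11, 9, 12, 16, 13]),
   (171, 7, [12, 10, 13, 17, 14]),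
   (194, 2, [4, 8, 13, 3, 5]),
   (218, 3, [5, 9, 14, 4, 6]),
   (242, 4, [6, 10, 15, 5, 7]),
   (266, 0, [3, 8, 5, 7, 4]),
   (290, 1, [4, 9, 6, 8, 5]),
   (314, 2, [5, 10, 7, 9, 6]),
   (356, 0, [4, 7, 3, 6, 2, 1]),
   (404, 0, [5, 8, 4, 3, 2, 1]),
   (452, 2, [7, 10, 6, 5, 4, 3]),
   (501, 0, [8, 7, 6, 5, 4, 2]),
   (549, 2, [10, 9, 8, 7, 6, 4]),
   (597, 4, [12, 11, 10, 9, 8, 6]),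
   (645, 6, [14, 13, 12, 11, 10, 8]),
   (693, 8, [16, 15, 14, 13, 12, 10]),
   (756, 0, [1, 2, 3, 4, 5, 7]),
   (804, 2, [3, 4, 5, 6, 7, 8]),
   (852, 0, [4, 5, 6, 7, 8, 3]),
   (900, 2, [6, 7, 8, 9, 10, 5]),
   (948, 4, [8, 9, 10, 11, 12, 7]),
   (996, 6, [10, 11, 12, 13, 14, 9]),
   (1000, 0, [8, 13, 14, 4])]

theorem covers_walks : covers 0 walks = true := by decide +kernel

section Walks

variable {A B : ℝ} {lo hi : ℤ}

/-- If the values at `k` and `l` both miss `[0, θ / 2)` modulo `1`, the shift bounds the difference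
of their integer parts. -/
theorem shift_add_floor_le (hlo : (lo : ℝ) ≤ 1000 * B) (hhi : 1000 * B ≤ hi) (k l : ℕ)
    (hl : 61 / 250 ≤ Int.fract (61 / 125 * (l : ℝ) ^ 2 + B * l + A)) :
    shift lo hi k l + ⌊61 / 125 * (l : ℝ) ^ 2 + B * l + A⌋
      ≤ ⌊61 / 125 * (k : ℝ) ^ 2 + B * k + A⌋ := by
  set c : ℤ := 244 - 488 * ((l : ℤ) ^ 2 - (k : ℤ) ^ 2) with hc
  have hcR : (c : ℝ) = 244 - 488 * ((l : ℝ) ^ 2 - (k : ℝ) ^ 2) := by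
    rw [hc]; push_cast; ring
  have h1 : (c - ((l : ℤ) - k) * lo) / 1000 * 1000 ≤ c - ((l : ℤ) - k) * lo :=
    Int.ediv_mul_le _ (by norm_num)
  have h2 : (c - ((l : ℤ) - k) * hi) / 1000 * 1000 ≤ c - ((l : ℤ) - k) * hi :=
    Int.ediv_mul_le _ (by norm_num)
  have m1 : shift lo hi k l * 1000 ≤ c - ((l : ℤ) - k) * lo :=
    (mul_le_mul_of_nonneg_right (min_le_left _ _) (by norm_num)).trans h1
  have m2 : shift lo hi k l * 1000 ≤ c - ((l : ℤ) - k) * hi :=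
    (mul_le_mul_of_nonneg_right (min_le_right _ _) (by norm_num)).trans h2
  have m1R : (shift lo hi k l : ℝ) * 1000 ≤ c - ((l : ℝ) - k) * lo := by exact_mod_cast m1
  have m2R : (shift lo hi k l : ℝ) * 1000 ≤ c - ((l : ℝ) - k) * hi := by exact_mod_cast m2
  have m3 : (shift lo hi k l : ℝ) * 1000 ≤ c - ((l : ℝ) - k) * (1000 * B) := by
    rcases le_total (k : ℝ) l with h | h
    · have := mul_le_mul_of_nonneg_left hhi (sub_nonneg.2 h)
      linarith
    · have := mul_le_mul_of_nonneg_left hlo (sub_nonneg.2 h)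
      linarith
  have hk := Int.lt_floor_add_one (61 / 125 * (k : ℝ) ^ 2 + B * k + A)
  rw [Int.fract] at hl
  rw [← Int.lt_add_one_iff]
  have : (shift lo hi k l : ℝ) + ⌊61 / 125 * (l : ℝ) ^ 2 + B * l + A⌋
      < ⌊61 / 125 * (k : ℝ) ^ 2 + B * k + A⌋ + 1 := by
    linarith
  exact_mod_cast this

theorem walkShift_add_floor_le (hlo : (lo : ℝ) ≤ 1000 * B) (hhi : 1000 * B ≤ hi)
    (hmiss : ∀ k : ℕ, k < 18 → 61 / 250 ≤ Int.fract (61 / 125 * (k : ℝ) ^ 2 + B * k + A))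
    (e : ℕ) (he : e < 18) (t : List ℕ) (ht : ∀ l ∈ t, l < 18) (k : ℕ) :
    walkShift lo hi k (t ++ [e]) + ⌊61 / 125 * (e : ℝ) ^ 2 + B * e + A⌋
      ≤ ⌊61 / 125 * (k : ℝ) ^ 2 + B * k + A⌋ := by
  induction t generalizing k with
  | nil =>
    have := shift_add_floor_le hlo hhi k e (hmiss e he)
    simpa [walkShift] using this
  | cons l t ih =>
    have h1 := shift_add_floor_le hlo hhi k l (hmiss l (ht l (by simp)))
    have h2 := ih (fun i hi => ht i (by simp [hi])) l
    simp only [List.cons_append, walkShift]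
    linarith

end Walks

theorem false_of_covers {A B : ℝ} (hB : 1000 * B < 1000)
    (hmiss : ∀ k : ℕ, k < 18 → 61 / 250 ≤ Int.fract (61 / 125 * (k : ℝ) ^ 2 + B * k + A))
    (L : List (ℤ × ℕ × List ℕ)) (lo : ℤ) (hlo : (lo : ℝ) ≤ 1000 * B)
    (hL : covers lo L = true) : False := by
  induction L generalizing lo with
  | nil =>
    have h : (1000 : ℤ) ≤ lo := by simpa [covers] using hL
    have : (1000 : ℝ) ≤ lo := by exact_mod_cast h
    linarith
  | cons a r ih =>
    obtain ⟨hi, k, t⟩ := a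
    simp only [covers, Bool.and_eq_true, decide_eq_true_eq, List.all_eq_true] at hL
    obtain ⟨⟨⟨hk, ht⟩, hpos⟩, hr⟩ := hL
    rcases le_total (1000 * B) hi with h | h
    · have := walkShift_add_floor_le hlo h hmiss k hk t ht k
      linarith
    · exact ih hi h hr

theorem exists_fract_lt (A B : ℝ) :
    ∃ k : ℕ, k < 18 ∧ Int.fract (61 / 125 * (k : ℝ) ^ 2 + B * k + A) < 61 / 250 := by
  by_contra! hmiss
  have h1 := Int.fract_lt_one B
  have h0 := Int.fract_nonneg B
  refine false_of_covers (A := A) (B := Int.fract B) (by linarith) (fun k hk => ?_) walks 0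
    (by push_cast; linarith) covers_walks
  -- Replacing `B` by its fractional part changes each value by the integer `⌊B⌋ * k`.
  have : 61 / 125 * (k : ℝ) ^ 2 + Int.fract B * k + A
      = 61 / 125 * (k : ℝ) ^ 2 + B * k + A - ((⌊B⌋ * (k : ℤ) : ℤ) : ℝ) := by
    rw [Int.fract]; push_cast; ring
  rw [this, Int.fract_sub_intCast]
  exact hmiss k hk

theorem no_unit_combination {a b c d : ℝ} (h : a + b - c - d = 1)
    (ha : Int.fract (61 / 125 * a) < 61 / 250) (hb : Int.fract (61 / 125 * b) < 61 / 250)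
    (hc : Int.fract (61 / 125 * c) < 61 / 250) (hd : Int.fract (61 / 125 * d) < 61 / 250) :
    False := by
  have ha0 := Int.fract_nonneg (61 / 125 * a)
  have hb0 := Int.fract_nonneg (61 / 125 * b)
  have hc0 := Int.fract_nonneg (61 / 125 * c)
  have hd0 := Int.fract_nonneg (61 / 125 * d)
  simp only [Int.fract] at *
  set m : ℤ := ⌊61 / 125 * a⌋ + ⌊61 / 125 * b⌋ - ⌊61 / 125 * c⌋ - ⌊61 / 125 * d⌋ with hm
  have hmR : (m : ℝ) = ⌊61 / 125 * a⌋ + ⌊61 / 125 * b⌋ - ⌊61 / 125 * c⌋ - ⌊61 / 125 * d⌋ := by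
    rw [hm]; push_cast; ring
  -- `0 < m < 2 θ < 1` is impossible for an integer.
  have h1 : (0 : ℝ) < m := by linarith
  have h2 : (m : ℝ) < 1 := by linarith
  have h1' : 0 < m := by exact_mod_cast h1
  have h2' : m < 1 := by exact_mod_cast h2
  omega

/-- E^n ↛ (P_1, ℓ_18): there is a red/blue coloring of n-dimensional Euclidean
space such that no (possibly degenerate) parallelogram x₁, x₂, x₃, x₄ with
x₁ + x₂ = x₃ + x₄ and (‖x₁ − x₂‖² − ‖x₃ − x₄‖²)/2 = 1 is entirely red, and
no congruent copy of ℓ_18 is entirely blue. -/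
theorem euclidean_not_arrow_P1_l18 (n : ℕ) (hn : 0 < n) :
    ∃ red : EuclideanSpace ℝ (Fin n) → Prop,
      (¬ ∃ x₁ x₂ x₃ x₄ : EuclideanSpace ℝ (Fin n),
        x₁ + x₂ = x₃ + x₄ ∧
        (‖x₁ - x₂‖ ^ 2 - ‖x₃ - x₄‖ ^ 2) / 2 = 1 ∧
        red x₁ ∧ red x₂ ∧ red x₃ ∧ red x₄) ∧
      (¬ ∃ (x v : EuclideanSpace ℝ (Fin n)), ‖v‖ = 1 ∧
        ∀ k : ℕ, k < 18 → ¬ red (x + (k : ℝ) • v)) := by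
  refine ⟨fun x => Int.fract (61 / 125 * ‖x‖ ^ 2) < 61 / 250, ?_, ?_⟩
  · rintro ⟨x₁, x₂, x₃, x₄, hsum, hdiff, h₁, h₂, h₃, h₄⟩
    refine no_unit_combination ?_ h₁ h₂ h₃ h₄
    have p := parallelogram_law_with_norm ℝ x₁ x₂
    have q := parallelogram_law_with_norm ℝ x₃ x₄
    rw [hsum] at p
    linarith
  · rintro ⟨x, v, hv, hblue⟩
    obtain ⟨k, hk, h⟩ := exists_fract_lt (61 / 125 * ‖x‖ ^ 2) (61 / 125 * (2 * inner ℝ x v))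
    refine hblue k hk ?_
    have hn : ‖x + (k : ℝ) • v‖ ^ 2 = ‖x‖ ^ 2 + 2 * (k * inner ℝ x v) + (k : ℝ) ^ 2 := by
      rw [norm_add_sq_real, inner_smul_right, norm_smul, hv]
      simp
    have e : 61 / 125 * ‖x + (k : ℝ) • v‖ ^ 2
        = 61 / 125 * (k : ℝ) ^ 2 + 61 / 125 * (2 * inner ℝ x v) * k + 61 / 125 * ‖x‖ ^ 2 := by
      rw [hn]; ring
    change Int.fract (61 / 125 * ‖x + (k : ℝ) • v‖ ^ 2) < 61 / 250
    rwa [e]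
end

section
/- For every positive integer n, there exists a red/blue coloring of n-dimensional Euclidean space E^n such that there are no four red points x_1, x_2, x_3, x_4 with x_1 + x_2 = x_3 + x_4 and (‖x_1 − x_2‖² − ‖x_3 − x_4‖²)/2 = 2, and there is no blue congruent copy of ℓ_20 (i.e., E^n ↛ (P_2, ℓ_20); note ℓ_3 ∈ P_2 as a degenerate parallelogram). -/
/-!
Colour a point `x` red when the fractional part of `0.241 * ‖x‖²` is less than `0.241`.

*Parallelograms.* If `x₁ + x₂ = x₃ + x₄`, the parallelogram law turns the condition on the
diagonals into `‖x₁‖² + ‖x₂‖² - ‖x₃‖² - ‖x₄‖² = 2`. For four red points, multiplying by `0.241`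
gives `0.482 = M + f` with `M` an integer and `|f| < 0.482`, so `0 < M < 0.964`: impossible.

*Lines.* On a line, `‖x + k v‖² = k² + 2⟪x, v⟫ k + ‖x‖²`. It therefore suffices that for all real
`b, c` some `k < 20` puts `0.241 k² + b k + c` in `[0, 0.241)` modulo `1`
(`exists_quadratic_mem_window`). Only `b, c` modulo `1` matter, so this is a statement about the
unit square. After scaling by `Q = 4096000`, the square is recursively bisected into boxes on each
of which a single `k` works; `coverBox` is this search and `coverBox_sound` its correctness.
-/

/-- Searches for some `k < n` such that `0.241 Q k² + x k + y` lies in `[0, 0.241 Q)` modulo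
`Q = 4096000` for all real `x ∈ [B, B + w]`, `y ∈ [C, C + v)`. Here `0.241 Q = 987136`. -/
def coverOne (B C w v : ℕ) : ℕ → Bool
  | 0 => false
  | k + 1 => Nat.ble ((987136 * (k * k) + B * k + C) % 4096000 + w * k + v) 987136 ||
      coverOne B C w v k

/-- Bisects the box `[B, B + w] × [C, C + v)` until `coverOne` succeeds on every piece, at most
`fuel` levels deep. Since `x` is multiplied by `k`, the `x`-side is kept several times shorter. -/
def coverBox : ℕ → ℕ → ℕ → ℕ → ℕ → Bool
  | 0, _, _, _, _ => false
  | fuel + 1, B, C, w, v =>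
    coverOne B C w v 20 ||
      (bif Nat.ble (6 * w) v then
        coverBox fuel B C w (v / 2) && coverBox fuel B (C + v / 2) w (v - v / 2)
      else
        coverBox fuel B C (w / 2) v && coverBox fuel (B + w / 2) C (w - w / 2) v)

lemma coverOne_sound (B C w v n : ℕ) (h : coverOne B C w v n = true) (x y : ℝ)
    (hx : (B : ℝ) ≤ x) (hx' : x ≤ B + w) (hy : (C : ℝ) ≤ y) (hy' : y < C + v) :
    ∃ k : ℕ, k < n ∧ ∃ m : ℤ, (m : ℝ) * 4096000 ≤ 987136 * (k : ℝ) ^ 2 + x * k + y ∧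
      987136 * (k : ℝ) ^ 2 + x * k + y < m * 4096000 + 987136 := by
  induction n with
  | zero => simp [coverOne] at h
  | succ k ih =>
    rw [coverOne, Bool.or_eq_true, Nat.ble_eq] at h
    rcases h with h | h
    · refine ⟨k, Nat.lt_succ_self k, (((987136 * (k * k) + B * k + C) / 4096000 : ℕ) : ℤ), ?_⟩
      have hdm := Nat.div_add_mod (987136 * (k * k) + B * k + C) 4096000
      generalize (987136 * (k * k) + B * k + C) / 4096000 = q at *
      generalize (987136 * (k * k) + B * k + C) % 4096000 = r at *
      have hdmR : (4096000 : ℝ) * q + r = 987136 * ((k : ℝ) * k) + B * k + C := by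
        exact_mod_cast hdm
      have hR : (r : ℝ) + w * k + v ≤ 987136 := by exact_mod_cast h
      have hk : (0 : ℝ) ≤ k := Nat.cast_nonneg k
      have hr : (0 : ℝ) ≤ r := Nat.cast_nonneg r
      have h1 := mul_le_mul_of_nonneg_right hx hk
      have h2 := mul_le_mul_of_nonneg_right hx' hk
      push_cast
      constructor <;> nlinarith
    · obtain ⟨j, hj, hm⟩ := ih h
      exact ⟨j, Nat.lt_succ_of_lt hj, hm⟩

lemma coverBox_sound (fuel B C w v : ℕ) (h : coverBox fuel B C w v = true) (x y : ℝ)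
    (hx : (B : ℝ) ≤ x) (hx' : x ≤ B + w) (hy : (C : ℝ) ≤ y) (hy' : y < C + v) :
    ∃ k : ℕ, k < 20 ∧ ∃ m : ℤ, (m : ℝ) * 4096000 ≤ 987136 * (k : ℝ) ^ 2 + x * k + y ∧
      987136 * (k : ℝ) ^ 2 + x * k + y < m * 4096000 + 987136 := by
  induction fuel generalizing B C w v with
  | zero => simp [coverBox] at h
  | succ fuel ih =>
    rw [coverBox, Bool.or_eq_true] at h
    rcases h with h | h
    · exact coverOne_sound B C w v 20 h x y hx hx' hy hy'
    · cases hb : Nat.ble (6 * w) v with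
      | true =>
        rw [hb, cond_true, Bool.and_eq_true] at h
        have e : ((v - v / 2 : ℕ) : ℝ) = v - (v / 2 : ℕ) := Nat.cast_sub (Nat.div_le_self v 2)
        rcases lt_or_ge y ((C : ℝ) + (v / 2 : ℕ)) with hc | hc
        · exact ih B C w (v / 2) h.1 hx hx' hy hc
        · exact ih B (C + v / 2) w (v - v / 2) h.2 hx hx' (by rw [Nat.cast_add]; exact hc)
            (by rw [e, Nat.cast_add]; linarith)
      | false =>
        rw [hb, cond_false, Bool.and_eq_true] at h
        have e : ((w - w / 2 : ℕ) : ℝ) = w - (w / 2 : ℕ) := Nat.cast_sub (Nat.div_le_self w 2)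
        rcases le_total x ((B : ℝ) + (w / 2 : ℕ)) with hc | hc
        · exact ih B C (w / 2) v h.1 hx hc hy hy'
        · exact ih (B + w / 2) C (w - w / 2) v h.2 (by rw [Nat.cast_add]; exact hc)
            (by rw [e, Nat.cast_add]; linarith) hy hy'

lemma coverBox_square : coverBox 40 0 0 4096000 4096000 = true := by
  decide +kernel

/-- Every sequence `0.241 k² + b k + c`, `k < 20`, meets `[0, 0.241)` modulo `1`. -/
lemma exists_quadratic_mem_window (b c : ℝ) :
    ∃ k : ℕ, k < 20 ∧ ∃ m : ℤ, (m : ℝ) ≤ 0.241 * (k : ℝ) ^ 2 + b * k + c ∧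
      0.241 * (k : ℝ) ^ 2 + b * k + c < m + 0.241 := by
  have hb0 := Int.fract_nonneg b
  have hb1 := Int.fract_lt_one b
  have hc0 := Int.fract_nonneg c
  have hc1 := Int.fract_lt_one c
  obtain ⟨k, hk, m, h1, h2⟩ := coverBox_sound 40 0 0 4096000 4096000 coverBox_square
    (4096000 * Int.fract b) (4096000 * Int.fract c) (by push_cast; linarith)
    (by push_cast; linarith) (by push_cast; linarith) (by push_cast; linarith)
  have hb : Int.fract b * k = b * k - ⌊b⌋ * k := by rw [← Int.self_sub_floor, sub_mul]
  have hc : Int.fract c = c - ⌊c⌋ := (Int.self_sub_floor c).symm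
  refine ⟨k, hk, m + ⌊b⌋ * k + ⌊c⌋, ?_, ?_⟩ <;> push_cast <;> linarith


/-- E^n ↛ (P_2, ℓ_20): there is a red/blue coloring of n-dimensional Euclidean
space such that no (possibly degenerate) parallelogram x₁, x₂, x₃, x₄ with
x₁ + x₂ = x₃ + x₄ and (‖x₁ − x₂‖² − ‖x₃ − x₄‖²)/2 = 2 is entirely red, and
no congruent copy of ℓ_20 is entirely blue. -/
theorem euclidean_not_arrow_P2_l20 (n : ℕ) (hn : 0 < n) :
    ∃ red : EuclideanSpace ℝ (Fin n) → Prop,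
      (¬ ∃ x₁ x₂ x₃ x₄ : EuclideanSpace ℝ (Fin n),
        x₁ + x₂ = x₃ + x₄ ∧
        (‖x₁ - x₂‖ ^ 2 - ‖x₃ - x₄‖ ^ 2) / 2 = 2 ∧
        red x₁ ∧ red x₂ ∧ red x₃ ∧ red x₄) ∧
      (¬ ∃ (x v : EuclideanSpace ℝ (Fin n)), ‖v‖ = 1 ∧
        ∀ k : ℕ, k < 20 → ¬ red (x + (k : ℝ) • v)) := by
  refine ⟨fun x => ∃ m : ℤ, (m : ℝ) ≤ 0.241 * ‖x‖ ^ 2 ∧ 0.241 * ‖x‖ ^ 2 < m + 0.241, ?_, ?_⟩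
  · rintro ⟨x₁, x₂, x₃, x₄, hs, hd, ⟨m₁, a₁, b₁⟩, ⟨m₂, a₂, b₂⟩, ⟨m₃, a₃, b₃⟩, ⟨m₄, a₄, b₄⟩⟩
    have p := parallelogram_law_with_norm ℝ x₁ x₂
    have q := parallelogram_law_with_norm ℝ x₃ x₄
    rw [hs] at p
    have key : ‖x₁‖ ^ 2 + ‖x₂‖ ^ 2 - ‖x₃‖ ^ 2 - ‖x₄‖ ^ 2 = 2 := by linarith
    have lo : (0 : ℝ) < ((m₁ + m₂ - m₃ - m₄ : ℤ) : ℝ) := by push_cast; linarith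
    have hi : ((m₁ + m₂ - m₃ - m₄ : ℤ) : ℝ) < 1 := by push_cast; linarith
    have lo' : 0 < m₁ + m₂ - m₃ - m₄ := by exact_mod_cast lo
    have hi' : m₁ + m₂ - m₃ - m₄ < 1 := by exact_mod_cast hi
    omega
  · rintro ⟨x, v, hv, h⟩
    obtain ⟨k, hk, m, h1, h2⟩ :=
      exists_quadratic_mem_window (0.241 * (2 * inner ℝ x v)) (0.241 * ‖x‖ ^ 2)
    have e : ‖x + (k : ℝ) • v‖ ^ 2 = ‖x‖ ^ 2 + 2 * inner ℝ x v * k + (k : ℝ) ^ 2 := by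
      rw [norm_add_sq_real, norm_smul, hv, inner_smul_right, mul_one, Real.norm_natCast]
      ring
    refine h k hk ⟨m, ?_, ?_⟩ <;> rw [e] <;> linarith
end

section
/- For each pair (p, S) in the list (47, {0,5,10,15,20}), (59, {0,5,10,15,20,25}), (67, {0,5,10,15,20,25,30}), (71, {0,5,10,15,20,25,30}), (73, {0,5,10,15,20,25,30}), (79, {0,5,10,15,20,25,30}), (83, {0,5,10,15,20,25,30,35}), the following hold: (1) for every b ∈ F_p \ {0} and every c ∈ F_p, the set bR_p + c = {bt² + c : t ∈ F_p} intersects S; (2) if α > 0 is a real number with α² ∈ [1, 1.5] (mod p), i.e., there is an integer m with 1 ≤ α² − pm ≤ 1.5, then the red/blue coloring of E^n whose red points are R = {x ∈ E^n : ⌊‖x‖²⌋ mod p ∈ S} contains no red congruent copy of αℓ_3. -/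
/-!
Part (1). Modulo nonzero squares there are only two classes of `b`: those of `1` and of a fixed
nonresidue `g`. The set `bR_p + c` depends only on the class of `b`, so for each `p` it suffices to
check the `2p` sets `R_p + c` and `gR_p + c`, a finite computation (`meets_of_two_classes`).

Part (2). The parallelogram law gives `‖x‖² + ‖z‖² - 2‖y‖² = 2α²`. Taking integer parts and writing
`α² = pm + β` with `β ∈ [1, 1.5]`, the integer `⌊‖x‖²⌋ + ⌊‖z‖²⌋ - 2⌊‖y‖²⌋ - 2pm` lies strictly
between `0` and `5` (`floor_combination_mem`). For red points it is congruent modulo `p` to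
`s₁ + s₃ - 2s₂` with `sᵢ ∈ S`, which is a multiple of `5` of absolute value at most `2 max S`. As
`2 max S + 4 < p` for every listed pair, the congruence would have to be an equality, and none of
`1, 2, 3, 4` is a multiple of `5` (`no_red_of_bound`).
-/

/-- If `g` is a nonresidue modulo `p`, then in order that every `bR_p + c` with `b ≠ 0` meet `S` it
suffices that the sets with `b = 1` and `b = g` do. The hypotheses are phrased with natural number
arithmetic so that they can be evaluated quickly. -/
lemma meets_of_two_classes (p : ℕ) (hp : p.Prime) (S : Finset ℕ) (g : ℕ)
    (hg : ∀ t < p, t * t % p ≠ g % p)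
    (h1 : ∀ c < p, ∃ t < p, (t * t + c) % p ∈ S)
    (h2 : ∀ c < p, ∃ t < p, (g * (t * t) + c) % p ∈ S) :
    ∀ b c : ZMod p, b ≠ 0 → ∃ t : ZMod p, (b * t ^ 2 + c).val ∈ S := by
  have : Fact p.Prime := ⟨hp⟩
  have hgs : ¬ IsSquare (g : ZMod p) := by
    rintro ⟨t, ht⟩
    refine hg t.val (ZMod.val_lt t) ?_
    rw [← ZMod.val_mul, ← ht, ZMod.val_natCast]
  have hg0 : (g : ZMod p) ≠ 0 := fun h => hgs (h ▸ IsSquare.zero)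
  intro b c hb
  by_cases hs : IsSquare b
  · obtain ⟨u, rfl⟩ := hs
    have hu : u ≠ 0 := left_ne_zero_of_mul hb
    obtain ⟨t, -, ht⟩ := h1 c.val (ZMod.val_lt c)
    refine ⟨t / u, ?_⟩
    have : u * u * ((t : ZMod p) / u) ^ 2 + c = ((t * t + c.val : ℕ) : ZMod p) := by
      push_cast
      rw [ZMod.natCast_zmod_val]
      field_simp
    rwa [this, ZMod.val_natCast]
  · -- a product of two nonresidues is a square
    have hbg : IsSquare (b * g) := by
      rw [← quadraticChar_one_iff_isSquare (mul_ne_zero hb hg0), map_mul,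
        quadraticChar_neg_one_iff_not_isSquare.2 hs, quadraticChar_neg_one_iff_not_isSquare.2 hgs]
      norm_num
    obtain ⟨u, hu⟩ := hbg
    have hu0 : u ≠ 0 := by
      rintro rfl
      exact mul_ne_zero hb hg0 (by simpa using hu)
    obtain ⟨t, -, ht⟩ := h2 c.val (ZMod.val_lt c)
    refine ⟨t * g / u, ?_⟩
    have : b * ((t : ZMod p) * g / u) ^ 2 + c = ((g * (t * t) + c.val : ℕ) : ZMod p) := by
      push_cast
      rw [ZMod.natCast_zmod_val]
      field_simp
      linear_combination (t : ZMod p) ^ 2 * g * hu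
    rwa [this, ZMod.val_natCast]

/-- For `α² = M + β` with `1 ≤ β ≤ 1.5`, the parallelogram law confines the second difference of the
integer parts of the squared norms to four consecutive values. -/
lemma floor_combination_mem {E : Type*} [NormedAddCommGroup E] [InnerProductSpace ℝ E]
    {x y z : E} {α : ℝ} {M : ℤ} (hM : 1 ≤ α ^ 2 - M) (hM' : α ^ 2 - M ≤ 1.5)
    (hxyz : x + z = (2 : ℝ) • y) (hα : ‖x - y‖ = α) :
    0 < ⌊‖x‖ ^ 2⌋ + ⌊‖z‖ ^ 2⌋ - 2 * ⌊‖y‖ ^ 2⌋ - 2 * M ∧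
      ⌊‖x‖ ^ 2⌋ + ⌊‖z‖ ^ 2⌋ - 2 * ⌊‖y‖ ^ 2⌋ - 2 * M < 5 := by
  have hid : ‖x‖ ^ 2 + ‖z‖ ^ 2 = 2 * ‖y‖ ^ 2 + 2 * α ^ 2 := by
    have hx : x = y + (x - y) := by abel
    have hz : z = y - (x - y) := by
      rw [eq_sub_of_add_eq' hxyz, two_smul]; abel
    have h := parallelogram_law_with_norm ℝ y (x - y)
    rw [← hx, ← hz, hα] at h
    linarith
  have a1 := Int.floor_le (‖x‖ ^ 2)
  have a2 := Int.lt_floor_add_one (‖x‖ ^ 2)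
  have b1 := Int.floor_le (‖y‖ ^ 2)
  have b2 := Int.lt_floor_add_one (‖y‖ ^ 2)
  have c1 := Int.floor_le (‖z‖ ^ 2)
  have c2 := Int.lt_floor_add_one (‖z‖ ^ 2)
  norm_num at hM'
  constructor
  · have : (0 : ℝ) < (⌊‖x‖ ^ 2⌋ + ⌊‖z‖ ^ 2⌋ - 2 * ⌊‖y‖ ^ 2⌋ - 2 * M : ℤ) := by
      push_cast; linarith
    exact_mod_cast this
  · have : ((⌊‖x‖ ^ 2⌋ + ⌊‖z‖ ^ 2⌋ - 2 * ⌊‖y‖ ^ 2⌋ - 2 * M : ℤ) : ℝ) < (5 : ℤ) := by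
      push_cast; linarith
    exact_mod_cast this

/-- An arithmetic condition on `(p, S)` sufficient for part (2): the elements of `S` are multiples
of `5` that are at most `5 * N`. Then `s₁ + s₃ - 2s₂` is at most `10 * N` in absolute value, so by
`10 * N + 4 < p` it can be congruent to `1, 2, 3` or `4` modulo `p` only by being equal to it, which
divisibility by `5` forbids. -/
lemma no_red_of_bound (p : ℕ) (S : Finset ℕ) (N : ℕ) (hS : ∀ s ∈ S, 5 ∣ s ∧ s ≤ 5 * N)
    (hN : 10 * N + 4 < p) :
    ∀ α : ℝ, 0 < α → (∃ m : ℤ, 1 ≤ α ^ 2 - (p : ℝ) * m ∧ α ^ 2 - (p : ℝ) * m ≤ 1.5) →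
      ∀ n : ℕ, 0 < n →
        ¬ ∃ x y z : EuclideanSpace ℝ (Fin n),
          x + z = (2 : ℝ) • y ∧ ‖x - y‖ = α ∧
          (∃ s ∈ S, ⌊‖x‖ ^ 2⌋ % (p : ℤ) = (s : ℤ)) ∧
          (∃ s ∈ S, ⌊‖y‖ ^ 2⌋ % (p : ℤ) = (s : ℤ)) ∧
          (∃ s ∈ S, ⌊‖z‖ ^ 2⌋ % (p : ℤ) = (s : ℤ)) := by
  rintro α - ⟨m, hm, hm'⟩ n - ⟨x, y, z, hxyz, hα, ⟨s₁, hs₁, h₁⟩, ⟨s₂, hs₂, h₂⟩, ⟨s₃, hs₃, h₃⟩⟩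
  obtain ⟨hpos, hlt⟩ := floor_combination_mem (M := p * m) (by push_cast; exact hm)
    (by push_cast; exact hm') hxyz hα
  have e₁ := Int.emod_add_mul_ediv ⌊‖x‖ ^ 2⌋ (p : ℤ)
  have e₂ := Int.emod_add_mul_ediv ⌊‖y‖ ^ 2⌋ (p : ℤ)
  have e₃ := Int.emod_add_mul_ediv ⌊‖z‖ ^ 2⌋ (p : ℤ)
  rw [h₁] at e₁
  rw [h₂] at e₂
  rw [h₃] at e₃
  obtain ⟨d₁, k₁⟩ := hS s₁ hs₁
  obtain ⟨d₂, k₂⟩ := hS s₂ hs₂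
  obtain ⟨d₃, k₃⟩ := hS s₃ hs₃
  obtain ⟨K, hK⟩ : ∃ K : ℤ, K = ⌊‖x‖ ^ 2⌋ / (p : ℤ) + ⌊‖z‖ ^ 2⌋ / (p : ℤ)
    - 2 * (⌊‖y‖ ^ 2⌋ / (p : ℤ)) - 2 * m := ⟨_, rfl⟩
  have key : ⌊‖x‖ ^ 2⌋ + ⌊‖z‖ ^ 2⌋ - 2 * ⌊‖y‖ ^ 2⌋ - 2 * (p * m)
      = (s₁ : ℤ) + s₃ - 2 * s₂ + p * K := by
    rw [hK]; linear_combination -e₁ - e₃ + 2 * e₂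
  rw [key] at hpos hlt
  have hK0 : K = 0 := by
    have hKu : K < 1 := by
      by_contra! h
      nlinarith
    have hKl : -1 < K := by
      by_contra! h
      nlinarith
    omega
  subst hK0
  omega


/-- For each pair (p, S) in the listed family: (1) for every b ∈ F_p \ {0} and
c ∈ F_p, the set bR_p + c = {bt² + c : t ∈ F_p} meets S (elements of F_p being
identified with their residues in {0, …, p−1}); and (2) if α > 0 with
α² ∈ [1, 1.5] (mod p), then the red/blue coloring of E^n whose red points are
{x : ⌊‖x‖²⌋ mod p ∈ S} contains no red congruent copy of αℓ_3. -/
theorem red_lemma (p : ℕ) (S : Finset ℕ)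
    (hpS : (p, S) ∈ [(47, ({0, 5, 10, 15, 20} : Finset ℕ)),
      (59, ({0, 5, 10, 15, 20, 25} : Finset ℕ)),
      (67, ({0, 5, 10, 15, 20, 25, 30} : Finset ℕ)),
      (71, ({0, 5, 10, 15, 20, 25, 30} : Finset ℕ)),
      (73, ({0, 5, 10, 15, 20, 25, 30} : Finset ℕ)),
      (79, ({0, 5, 10, 15, 20, 25, 30} : Finset ℕ)),
      (83, ({0, 5, 10, 15, 20, 25, 30, 35} : Finset ℕ))]) :
    (∀ b c : ZMod p, b ≠ 0 → ∃ t : ZMod p, (b * t ^ 2 + c).val ∈ S) ∧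
    (∀ α : ℝ, 0 < α → (∃ m : ℤ, 1 ≤ α ^ 2 - (p : ℝ) * m ∧ α ^ 2 - (p : ℝ) * m ≤ 1.5) →
      ∀ n : ℕ, 0 < n →
        ¬ ∃ x y z : EuclideanSpace ℝ (Fin n),
          x + z = (2 : ℝ) • y ∧ ‖x - y‖ = α ∧
          (∃ s ∈ S, ⌊‖x‖ ^ 2⌋ % (p : ℤ) = (s : ℤ)) ∧
          (∃ s ∈ S, ⌊‖y‖ ^ 2⌋ % (p : ℤ) = (s : ℤ)) ∧
          (∃ s ∈ S, ⌊‖z‖ ^ 2⌋ % (p : ℤ) = (s : ℤ))) := by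
  have red {q N g : ℕ} {T : Finset ℕ} (hq : q.Prime) (hT : ∀ s ∈ T, 5 ∣ s ∧ s ≤ 5 * N)
      (hN : 10 * N + 4 < q) (hg : ∀ t < q, t * t % q ≠ g % q)
      (h1 : ∀ c < q, ∃ t < q, (t * t + c) % q ∈ T)
      (h2 : ∀ c < q, ∃ t < q, (g * (t * t) + c) % q ∈ T) :=
    And.intro (meets_of_two_classes q hq T g hg h1 h2) (no_red_of_bound q T N hT hN)
  simp only [List.mem_cons, List.not_mem_nil, or_false, Prod.mk.injEq] at hpS
  -- `N` is the number of nonzero elements of `S`, and `g` the least quadratic nonresidue modulo `p`.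
  rcases hpS with ⟨rfl, rfl⟩ | ⟨rfl, rfl⟩ | ⟨rfl, rfl⟩ | ⟨rfl, rfl⟩ | ⟨rfl, rfl⟩ | ⟨rfl, rfl⟩ |
    ⟨rfl, rfl⟩
  · exact red (N := 4) (g := 5) (by norm_num) (by decide) (by norm_num) (by decide +kernel)
      (by decide +kernel) (by decide +kernel)
  · exact red (N := 5) (g := 2) (by norm_num) (by decide) (by norm_num) (by decide +kernel)
      (by decide +kernel) (by decide +kernel)
  · exact red (N := 6) (g := 2) (by norm_num) (by decide) (by norm_num) (by decide +kernel)
      (by decide +kernel) (by decide +kernel)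
  · exact red (N := 6) (g := 7) (by norm_num) (by decide) (by norm_num) (by decide +kernel)
      (by decide +kernel) (by decide +kernel)
  · exact red (N := 6) (g := 5) (by norm_num) (by decide) (by norm_num) (by decide +kernel)
      (by decide +kernel) (by decide +kernel)
  · exact red (N := 6) (g := 3) (by norm_num) (by decide) (by norm_num) (by decide +kernel)
      (by decide +kernel) (by decide +kernel)
  · exact red (N := 7) (g := 2) (by norm_num) (by decide) (by norm_num) (by decide +kernel)
      (by decide +kernel) (by decide +kernel)
end

section
/- Let p be an odd prime and α > 0 a real number with α² = b + ε, where b is an integer not divisible by p and 0 ≤ ε ≤ (4p⁵)^{-1}. Suppose x_0, x_1, …, x_{M−1} ∈ E^n form a congruent copy of αℓ_M, and set X_k = ‖x_k‖². If ε = 0 and M = p², then there exists c ∈ F_p such that bR_p + c ⊆ {⌊X_k⌋ mod p : 0 ≤ k ≤ M−1} as subsets of F_p. If ε > 0 and M = 2p² − 2p + 1, then there exists c ∈ F_p such that bR_p* + c ⊆ {⌊X_k⌋ mod p : 0 ≤ k ≤ M−1} as subsets of F_p. -/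
/-!
Along the progression, `‖x k‖ ^ 2 = (b + ε) k ^ 2 + β k + γ` with `β, γ` real. By Dirichlet there
are coprime `a` and `1 ≤ q < p` with `|q β - a| ≤ 1 / p`. On a subprogression `k = s + q i` the value
is an integer `b (s + q i) ^ 2 + a i` plus the slowly varying term `δ i + ε (s + q i) ^ 2 + const`,
`δ = q β - a`. If the integer part of the latter is a constant `m` over a block of `p` consecutive
`i`, the values modulo `p` are those of a quadratic polynomial with leading coefficient `b q ^ 2` at
all residues, and completing the square gives a translate of `b R_p`. A block of `p - 1` consecutive
`i` misses a single residue, hence (as `t` and `-t` give the same value) loses at most `t = 0`.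

Such a block exists (`exists_window`). If `δ ≥ 0` the slow term is increasing, and a block starting
just after it crosses an integer works (`exists_window_of_crossing`). To reach the crossing early
enough, the residue `s` mod `q` is chosen so that `a s / q`, which takes all values in `(1/q) ℤ / ℤ`,
puts the initial value only slightly below an integer. If `δ < 0`, the progression is traversed
backwards. For `ε = 0` this costs nothing, since reversal changes `-β` by an integer; for `ε > 0`
both directions start from the middle index `p ^ 2 - p`, so that the quadratic term is increasing in
either direction.
-/

/-! ### Blocks with constant integer part -/

/-- A slowly increasing real sequence that starts negative and becomes nonnegative by time `J` stays
in `[0, 1)` for `L + 1` steps from its first nonnegative term. -/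
lemma exists_window_of_crossing (h : ℕ → ℝ) (hmono : Monotone h) (J L : ℕ) (h0 : h 0 < 0)
    (hJ : 0 ≤ h J) (hstep : ∀ i < J, h (i + 1 + L) - h i ≤ 1) :
    ∃ j ≤ J, ∀ i ≤ L, 0 ≤ h (j + i) ∧ h (j + i) < 1 := by
  classical
  have hex : ∃ j, 0 ≤ h j := ⟨J, hJ⟩
  obtain ⟨j, hj⟩ : ∃ j, j + 1 = Nat.find hex := by
    rcases hn : Nat.find hex with _ | j
    · have := Nat.find_spec hex
      rw [hn] at this
      linarith
    · exact ⟨j, rfl⟩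
  have hle : Nat.find hex ≤ J := Nat.find_min' hex hJ
  have hpos : 0 ≤ h (j + 1) := by rw [hj]; exact Nat.find_spec hex
  have hneg : h j < 0 := by
    have := Nat.find_min hex (m := j) (by omega)
    linarith
  refine ⟨j + 1, by omega, fun i hi => ⟨hpos.trans (hmono (by omega)), ?_⟩⟩
  have h1 := hstep j (by omega)
  have h2 : h (j + 1 + i) ≤ h (j + 1 + L) := hmono (by omega)
  linarith

/-- Since `a` is a unit modulo `q`, every integer `w` is of the form `a s - q m` with `0 ≤ s < q`. -/
lemma exists_residue (q : ℕ) (hq : 1 ≤ q) (a w : ℤ) (hcop : IsCoprime a (q : ℤ)) :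
    ∃ s : ℕ, s < q ∧ ∃ m : ℤ, a * s = w + q * m := by
  obtain ⟨u, v, huv⟩ := hcop
  have hq0 : (q : ℤ) ≠ 0 := by positivity
  have hnn := Int.emod_nonneg (w * u) hq0
  have hlt := Int.emod_lt_of_pos (w * u) (show (0 : ℤ) < q by omega)
  refine ⟨((w * u) % q).toNat, by omega, -(w * v) - a * (w * u / q), ?_⟩
  rw [Int.toNat_of_nonneg hnn]
  have := Int.emod_add_mul_ediv (w * u) q
  linear_combination a * this + w * huv

/-- The slow part of the sequence along `s + q i`, after removal of the integer `a i`, has constant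
integer part `m` on a block `i = 0, …, L` inside `[0, N]`, for a suitable `s`. The two numerical
conditions say that a block beginning just after an integer fits before the next one (`H1`), and that
starting within `1 / q` of an integer shifted down by `(p - q) δ` is close enough (`H2`). -/
lemma exists_window (p q L N : ℕ) (a : ℤ) (β γ ε δ E : ℝ) (hq : 1 ≤ q) (hqp : q + 1 ≤ p)
    (hcop : IsCoprime a (q : ℤ)) (hδ : q * β = a + δ) (hδ0 : 0 ≤ δ) (hε : 0 ≤ ε)
    (hE : ε * N ^ 2 ≤ E) (hN : q + (p - q) * q + q * L ≤ N + 1) (hN1 : 2 * L ≤ N)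
    (H1 : (L + 1) * δ + E ≤ 1)
    (H2 : 2 ≤ q → δ * (L * q - (p - q) * q + q - 1) + E * q ≤ q - 1) :
    ∃ s : ℕ, s + q * L ≤ N ∧ ∃ m : ℤ, ∀ i ≤ L,
      (m : ℝ) ≤ β * (s + q * i) + ε * (s + q * i) ^ 2 + γ - a * i ∧
      β * (s + q * i) + ε * (s + q * i) ^ 2 + γ - a * i < m + 1 := by
  have hEb : ∀ k : ℕ, k ≤ N → ε * (k : ℝ) ^ 2 ≤ E := fun k hk => by
    have : (k : ℝ) ≤ N := by exact_mod_cast hk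
    exact le_trans (by gcongr) hE
  have hE0 : 0 ≤ E := le_trans (by positivity) hE
  have hmono : ∀ (s : ℕ) (A : ℝ),
      Monotone (fun i : ℕ => A + δ * i + ε * ((s + q * i : ℕ) : ℝ) ^ 2) := by
    intro s A i j hij
    have h1 : (i : ℝ) ≤ j := by exact_mod_cast hij
    have h2 : ((s + q * i : ℕ) : ℝ) ≤ ((s + q * j : ℕ) : ℝ) := by
      exact_mod_cast (by gcongr)
    simp only
    gcongr
  have hstep : ∀ (s : ℕ) (A : ℝ) (i : ℕ), s + q * (i + 1 + L) ≤ N →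
      (A + δ * (i + 1 + L : ℕ) + ε * ((s + q * (i + 1 + L) : ℕ) : ℝ) ^ 2)
        - (A + δ * i + ε * ((s + q * i : ℕ) : ℝ) ^ 2) ≤ 1 := by
    intro s A i hi
    have h1 := hEb _ hi
    have h2 : 0 ≤ ε * ((s + q * i : ℕ) : ℝ) ^ 2 := by positivity
    have h3 : ((i + 1 + L : ℕ) : ℝ) = i + 1 + L := by push_cast; ring
    rw [h3]
    linarith
  rcases Nat.lt_or_ge q 2 with hq2 | hq2
  · -- For `q = 1` there is room for two blocks; one of them starts at `0` or at the first crossing.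
    obtain rfl : q = 1 := by omega
    have hβ : β = a + δ := by simpa using hδ
    set h : ℕ → ℝ := fun i : ℕ => (γ - ⌊γ⌋ - 1) + δ * i + ε * ((0 + 1 * i : ℕ) : ℝ) ^ 2 with hh
    have h0 : h 0 < 0 := by simp [hh]; exact Int.fract_lt_one γ
    have h0' : -1 ≤ h 0 := by simp [hh]
    have hm : Monotone h := hmono 0 _
    rcases lt_or_ge (h L) 0 with hL | hL
    · refine ⟨0, by omega, ⌊γ⌋, fun i hi => ?_⟩
      have e1 : -1 ≤ h i := h0'.trans (hm (by omega))
      have e2 : h i < 0 := (hm hi).trans_lt hL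
      simp only [hh] at e1 e2
      push_cast at e1 e2 ⊢
      rw [hβ]
      constructor <;> linarith
    · obtain ⟨j, hj, hw⟩ := exists_window_of_crossing h hm L L h0 hL
        (fun i hi => hstep 0 _ i (by omega))
      refine ⟨j, by omega, ⌊γ⌋ + 1 + a * j, fun i hi => ?_⟩
      obtain ⟨e1, e2⟩ := hw i hi
      simp only [hh] at e1 e2
      push_cast at e1 e2 ⊢
      rw [hβ]
      constructor <;> linarith
  · have hq0 : (0 : ℝ) < q := by positivity
    have hpq : ((p - q : ℕ) : ℝ) = p - q := by rw [Nat.cast_sub (by omega)]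
    set w : ℤ := ⌈-(q * (γ + (p - q) * δ))⌉ with hw
    have hw1 : -(q * (γ + (p - q) * δ)) ≤ w := Int.le_ceil _
    have hw2 : w < -(q * (γ + (p - q) * δ)) + 1 := Int.ceil_lt_add_one _
    obtain ⟨s, hs, m, hsm⟩ := exists_residue q hq a w hcop
    have hsm' : (a : ℝ) * s = w + q * m := by exact_mod_cast hsm
    have hs' : (s : ℝ) ≤ q - 1 := by
      have : (s : ℝ) + 1 ≤ q := by exact_mod_cast hs
      linarith
    set A : ℝ := w / q + γ + δ * s / q with hA
    have hqA : q * A = w + q * γ + δ * s := by rw [hA]; field_simp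
    have hds : 0 ≤ δ * s := by positivity
    have hds' : δ * s ≤ δ * (q - 1) := by gcongr
    have hAβ : A = β * s + γ - m := by
      apply mul_left_cancel₀ hq0.ne'
      linear_combination hqA - hsm' - s * hδ
    set h : ℕ → ℝ := fun i : ℕ => A + δ * i + ε * ((s + q * i : ℕ) : ℝ) ^ 2 with hh
    have hm : Monotone h := hmono s A
    have key : ∀ k : ℕ, h k = β * (s + q * k) + ε * (s + q * k) ^ 2 + γ - a * k - m := by
      intro k
      simp only [hh, hAβ]
      push_cast
      linear_combination -(k : ℝ) * hδ
    have hroom : ∀ j i : ℕ, j ≤ p - q → i ≤ L → s + q * (j + i) ≤ N := by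
      intro j i hj hi
      have e1 : q * j ≤ (p - q) * q := by rw [mul_comm]; gcongr
      have e2 : q * i ≤ q * L := by gcongr
      rw [mul_add]; omega
    have hJ : 0 ≤ h (p - q) := by
      have e1 : 0 ≤ q * (A + δ * (p - q)) := by rw [mul_add, hqA]; linarith
      have e2 : 0 ≤ A + δ * (p - q) := nonneg_of_mul_nonneg_right e1 hq0
      have e3 : 0 ≤ ε * ((s + q * (p - q) : ℕ) : ℝ) ^ 2 := by positivity
      simp only [hh, hpq]
      linarith
    obtain ⟨j, hj, hwin⟩ : ∃ j ≤ p - q, ∀ i ≤ L, 0 ≤ h (j + i) ∧ h (j + i) < 1 := by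
      rcases lt_or_ge (h 0) 0 with h0 | h0
      · exact exists_window_of_crossing h hm (p - q) L h0 hJ
          (fun i hi => hstep s A i (hroom (i + 1) L (by omega) le_rfl))
      · refine ⟨0, by omega, fun i hi => ?_⟩
        rw [zero_add]
        refine ⟨h0.trans (hm (by omega)), (hm hi).trans_lt ?_⟩
        have e1 := hEb (s + q * L) (by simpa using hroom 0 L (by omega) le_rfl)
        have e2 : q * (A + δ * L + E) < q * 1 := by
          have := H2 hq2
          rw [mul_add, mul_add, hqA]
          linarith
        have e3 := lt_of_mul_lt_mul_left e2 hq0.le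
        simp only [hh]
        linarith
    refine ⟨s + q * j, ?_, m + a * j, fun i hi => ?_⟩
    · have := hroom j L hj le_rfl
      rw [mul_add] at this; omega
    · obtain ⟨e1, e2⟩ := hwin i hi
      rw [key] at e1 e2
      push_cast at e1 e2 ⊢
      ring_nf at e1 e2 ⊢
      constructor <;> linarith

/-! ### Covering residues -/

/-- Completing the square: `b (s + q i) ^ 2 + a i + m` takes the value `b t ^ 2 + c` at some `i < p`,
and even at some `i < p - 1` when `t ≠ 0`. -/
lemma exists_index (p : ℕ) [Fact p.Prime] (hodd : Odd p) (b q a s m : ZMod p) (hb : b ≠ 0)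
    (hq : q ≠ 0) :
    ∃ c : ZMod p, ∀ t : ZMod p,
      (∃ i : ℕ, i ≤ p - 1 ∧ b * (s + q * i) ^ 2 + a * i + m = b * t ^ 2 + c) ∧
      (t ≠ 0 → ∃ i : ℕ, i ≤ p - 2 ∧ b * (s + q * i) ^ 2 + a * i + m = b * t ^ 2 + c) := by
  have hp2 : p ≠ 2 := by rintro rfl; exact absurd hodd (by decide)
  have h2 : (2 : ZMod p) ≠ 0 := by
    intro h
    exact hp2 ((Nat.prime_dvd_prime_iff_eq (Fact.out : p.Prime) Nat.prime_two).1
      ((ZMod.natCast_eq_zero_iff 2 p).1 (by exact_mod_cast h)))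
  let I : ZMod p → ZMod p := fun t => (t - a / (2 * b * q) - s) / q
  have hI : ∀ t, b * (s + q * I t) ^ 2 + a * I t + m
      = b * t ^ 2 + (m - a * s / q - a ^ 2 / (4 * b * q ^ 2)) := by
    intro t
    have h4 : (4 : ZMod p) ≠ 0 := by
      rw [show (4 : ZMod p) = 2 * 2 by norm_num]; exact mul_ne_zero h2 h2
    simp only [I]
    field_simp
    ring
  have hI' : ∀ t, b * (s + q * ((I t).val : ℕ)) ^ 2 + a * ((I t).val : ℕ) + m
      = b * t ^ 2 + (m - a * s / q - a ^ 2 / (4 * b * q ^ 2)) := by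
    intro t
    rw [ZMod.natCast_zmod_val]; exact hI t
  refine ⟨_, fun t => ⟨⟨(I t).val, ?_, hI' t⟩, fun ht => ?_⟩⟩
  · have := ZMod.val_lt (I t); omega
  · by_cases hv : (I t).val ≤ p - 2
    · exact ⟨_, hv, hI' t⟩
    · refine ⟨(I (-t)).val, ?_, by rw [hI' (-t), neg_sq]⟩
      by_contra hv'
      have l1 := ZMod.val_lt (I t)
      have l2 := ZMod.val_lt (I (-t))
      have heq : I t = I (-t) := ZMod.val_injective p (by omega)
      simp only [I, div_left_inj' hq, sub_left_inj] at heq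
      have : 2 * t = 0 := by linear_combination heq
      exact (mul_ne_zero h2 ht) this

/-- The covering statement for a quadratic sequence, given a window of length `L + 1`. -/
lemma cover_of_window (p q L N : ℕ) [Fact p.Prime] (hodd : Odd p) (a b : ℤ)
    (hb : ¬ (p : ℤ) ∣ b) (β γ ε : ℝ) (hq : 1 ≤ q) (hqp : q + 1 ≤ p)
    (hw : ∃ s : ℕ, s + q * L ≤ N ∧ ∃ m : ℤ, ∀ i ≤ L,
      (m : ℝ) ≤ β * (s + q * i) + ε * (s + q * i) ^ 2 + γ - a * i ∧
      β * (s + q * i) + ε * (s + q * i) ^ 2 + γ - a * i < m + 1) :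
    ∃ c : ZMod p, ∀ t : ZMod p, (L = p - 1 ∨ L = p - 2 ∧ t ≠ 0) →
      ∃ j ≤ N, ((⌊(b + ε) * (j : ℝ) ^ 2 + β * j + γ⌋ : ℤ) : ZMod p) = b * t ^ 2 + c := by
  obtain ⟨s, hs, m, hm⟩ := hw
  have hb' : (b : ZMod p) ≠ 0 := by rwa [Ne, ZMod.intCast_zmod_eq_zero_iff_dvd]
  have hq' : (q : ZMod p) ≠ 0 := by
    rw [Ne, ZMod.natCast_eq_zero_iff]
    intro h
    have := Nat.le_of_dvd (by omega) h
    omega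
  obtain ⟨c, hc⟩ := exists_index p hodd (b : ZMod p) q a s m hb' hq'
  refine ⟨c, fun t ht => ?_⟩
  obtain ⟨i, hi, hit⟩ : ∃ i : ℕ, i ≤ L ∧
      (b : ZMod p) * (s + q * i) ^ 2 + a * i + m = b * t ^ 2 + c := by
    rcases ht with rfl | ⟨rfl, ht⟩
    · exact (hc t).1
    · exact (hc t).2 ht
  refine ⟨s + q * i, le_trans (by gcongr) hs, ?_⟩
  have hfl : ⌊(b + ε) * ((s + q * i : ℕ) : ℝ) ^ 2 + β * (s + q * i : ℕ) + γ⌋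
      = b * (s + q * i) ^ 2 + a * i + m := by
    obtain ⟨e1, e2⟩ := hm i hi
    rw [Int.floor_eq_iff]
    push_cast
    constructor <;> linarith
  rw [hfl, ← hit]
  push_cast
  ring

/-- Covering for `ε = 0` when the rational approximation is from below. -/
lemma cover_zero (p q : ℕ) [Fact p.Prime] (hodd : Odd p) (a b : ℤ)
    (hb : ¬ (p : ℤ) ∣ b) (β γ : ℝ) (hq : 1 ≤ q) (hqp : q + 1 ≤ p)
    (hcop : IsCoprime a (q : ℤ)) (h0 : 0 ≤ q * β - a) (h1 : p * (q * β - a) ≤ 1) :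
    ∃ c : ZMod p, ∀ t : ZMod p,
      ∃ j ≤ p ^ 2 - 1, ((⌊(b : ℝ) * (j : ℝ) ^ 2 + β * j + γ⌋ : ℤ) : ZMod p) = b * t ^ 2 + c := by
  have hqp' : (q : ℝ) + 1 ≤ p := by exact_mod_cast hqp
  have hq' : (1 : ℝ) ≤ q := by exact_mod_cast hq
  have hw := exists_window p q (p - 1) (p ^ 2 - 1) a β γ 0 (q * β - a) 0 hq hqp hcop (by ring) h0
    le_rfl (by simp)
    (by
      obtain ⟨d, rfl⟩ := Nat.exists_eq_add_of_le hqp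
      have e1 : q + 1 + d - q = d + 1 := by omega
      have e2 : q + 1 + d - 1 = q + d := by omega
      have e3 : (q + 1 + d) ^ 2 - 1 + 1 = (q + 1 + d) ^ 2 := Nat.sub_add_cancel (Nat.one_le_pow _ _ (by omega))
      rw [e1, e2, e3]
      nlinarith [Nat.zero_le (d ^ 2)])
    (by
      obtain ⟨d, rfl⟩ := Nat.exists_eq_add_of_le (show 1 ≤ p by omega)
      have e3 : (1 + d) ^ 2 - 1 = d ^ 2 + 2 * d := by
        rw [show (1 + d) ^ 2 = d ^ 2 + 2 * d + 1 by ring]; rfl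
      rw [e3]
      have : 1 + d - 1 = d := by omega
      rw [this]; nlinarith [Nat.zero_le (d ^ 2)])
    (by rw [Nat.cast_sub (by omega)]; push_cast; linarith)
    (fun _ => by
      rw [Nat.cast_sub (by omega)]
      push_cast
      have e : (q * β - a) * (q + 1) ≤ 1 := by nlinarith
      nlinarith)
  obtain ⟨c, hc⟩ := cover_of_window p q (p - 1) (p ^ 2 - 1) hodd a b hb β γ 0 hq hqp hw
  exact ⟨c, fun t => by simpa using hc t (Or.inl rfl)⟩

/-- Covering for small `ε ≥ 0` when the rational approximation is from below. -/
lemma cover_pos (p q : ℕ) [Fact p.Prime] (hodd : Odd p) (a b : ℤ)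
    (hb : ¬ (p : ℤ) ∣ b) (β γ ε : ℝ) (hq : 1 ≤ q) (hqp : q + 1 ≤ p)
    (hε₀ : 0 ≤ ε) (hε₁ : ε ≤ (4 * (p : ℝ) ^ 5)⁻¹)
    (hcop : IsCoprime a (q : ℤ)) (h0 : 0 ≤ q * β - a) (h1 : p * (q * β - a) ≤ 1) :
    ∃ c : ZMod p, ∀ t : ZMod p, t ≠ 0 →
      ∃ j ≤ p ^ 2 - p,
        ((⌊(b + ε) * (j : ℝ) ^ 2 + β * j + γ⌋ : ℤ) : ZMod p) = b * t ^ 2 + c := by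
  have hqp' : (q : ℝ) + 1 ≤ p := by exact_mod_cast hqp
  have hq' : (1 : ℝ) ≤ q := by exact_mod_cast hq
  have hp0 : (0 : ℝ) < p := by linarith
  have hpE : p * (4 * (p : ℝ))⁻¹ = 1 / 4 := by field_simp
  have hp3 : 3 ≤ p := by
    rcases hodd with ⟨k, rfl⟩
    omega
  have hw := exists_window p q (p - 2) (p ^ 2 - p) a β γ ε (q * β - a) (4 * (p : ℝ))⁻¹
    hq hqp hcop (by ring) h0 hε₀
    (by
      have e1 : ((p ^ 2 - p : ℕ) : ℝ) ≤ (p : ℝ) ^ 2 := by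
        exact_mod_cast Nat.sub_le _ _
      calc ε * ((p ^ 2 - p : ℕ) : ℝ) ^ 2 ≤ (4 * (p : ℝ) ^ 5)⁻¹ * ((p : ℝ) ^ 2) ^ 2 := by gcongr
        _ = (4 * (p : ℝ))⁻¹ := by field_simp)
    (by
      -- With `d = p - q - 1` the difference of the two sides is `d ^ 2 + d + 1`.
      obtain ⟨d, rfl⟩ := Nat.exists_eq_add_of_le hqp
      have e1 : q + 1 + d - q = d + 1 := by omega
      have e2 : (q + 1 + d) ^ 2 - (q + 1 + d) = (q + d) * (q + 1 + d) := by
        rw [show (q + 1 + d) ^ 2 = (q + d) * (q + 1 + d) + (q + 1 + d) by ring, Nat.add_sub_cancel]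
      obtain ⟨r, hr⟩ := Nat.exists_eq_add_of_le (show 1 ≤ q + d by omega)
      have e3 : q + 1 + d - 2 = r := by omega
      rw [e1, e2, e3]
      zify at hr ⊢
      have hr' : (r : ℤ) = q + d - 1 := by linarith
      rw [hr']
      nlinarith [sq_nonneg (d : ℤ)])
    (by
      obtain ⟨d, rfl⟩ := Nat.exists_eq_add_of_le hp3
      have e2 : (3 + d) ^ 2 - (3 + d) = (2 + d) * (3 + d) := by
        rw [show (3 + d) ^ 2 = (2 + d) * (3 + d) + (3 + d) by ring, Nat.add_sub_cancel]
      have e3 : 3 + d - 2 = d + 1 := by omega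
      rw [e2, e3]
      nlinarith [Nat.zero_le (d ^ 2)])
    (by
      rw [Nat.cast_sub (by omega)]
      push_cast
      refine le_of_mul_le_mul_left ?_ hp0
      rw [mul_add, hpE]
      nlinarith)
    (fun h2 => by
      rw [Nat.cast_sub (by omega)]
      push_cast
      have h2' : (2 : ℝ) ≤ q := by exact_mod_cast h2
      refine le_of_mul_le_mul_left ?_ hp0
      rw [mul_add, ← mul_assoc (p : ℝ) _ (q : ℝ), hpE]
      have e1 : (0 : ℝ) ≤ q ^ 2 - q - 1 := by nlinarith
      have e2 := mul_le_mul_of_nonneg_right h1 e1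
      have e3 := mul_le_mul_of_nonneg_right hqp' (show (0 : ℝ) ≤ q - 1 by linarith)
      linarith)
  obtain ⟨c, hc⟩ := cover_of_window p q (p - 2) (p ^ 2 - p) hodd a b hb β γ ε hq hqp hw
  exact ⟨c, fun t ht => hc t (Or.inr ⟨rfl, ht⟩)⟩

/-! ### Rational approximation and the two directions -/

/-- Dirichlet approximation with denominator prime to `p`, in lowest terms. -/
lemma exists_approx (p : ℕ) (hp : 3 ≤ p) (β : ℝ) :
    ∃ (q : ℕ) (a : ℤ), 1 ≤ q ∧ q + 1 ≤ p ∧ IsCoprime a (q : ℤ) ∧ p * |q * β - a| ≤ 1 := by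
  obtain ⟨r, hr, hd⟩ := Real.exists_rat_abs_sub_le_and_den_le β (show 0 < p - 1 by omega)
  have hd0 : (0 : ℝ) < r.den := by exact_mod_cast r.pos
  have hp0 : (0 : ℝ) < p := by positivity
  refine ⟨r.den, r.num, r.pos, by omega, ?_, ?_⟩
  · rw [Int.isCoprime_iff_nat_coprime]
    simpa using r.reduced
  · have e : (r.den : ℝ) * β - r.num = r.den * (β - r) := by
      have : (r : ℝ) * r.den = r.num := by exact_mod_cast Rat.mul_den_eq_num r
      linear_combination this
    rw [e, abs_mul, abs_of_pos hd0]
    rw [Nat.cast_sub (by omega), Nat.cast_one, sub_add_cancel, le_div_iff₀ (by positivity)] at hr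
    linarith


/-- Let p be an odd prime, α > 0 with α² = b + ε where b is an integer not
divisible by p and 0 ≤ ε ≤ (4p⁵)⁻¹. Suppose x₀, …, x_{M−1} form a congruent
copy of αℓ_M, with X_k = ‖x_k‖². If ε = 0 and M = p², then for some c ∈ F_p we
have bR_p + c ⊆ {⌊X_k⌋ mod p : 0 ≤ k ≤ M−1}; if ε > 0 and M = 2p² − 2p + 1,
then for some c ∈ F_p we have bR_p* + c ⊆ {⌊X_k⌋ mod p : 0 ≤ k ≤ M−1}. -/
theorem blue_lemma (p : ℕ) (hp : p.Prime) (hodd : Odd p)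
    (α : ℝ) (hα : 0 < α) (b : ℤ) (ε : ℝ)
    (hb : ¬ (p : ℤ) ∣ b) (hαsq : α ^ 2 = (b : ℝ) + ε)
    (hε₀ : 0 ≤ ε) (hε₁ : ε ≤ (4 * (p : ℝ) ^ 5)⁻¹)
    (n M : ℕ) (x : ℕ → EuclideanSpace ℝ (Fin n)) (v : EuclideanSpace ℝ (Fin n))
    (hv : ‖v‖ = α) (hx : ∀ k < M, x k = x 0 + (k : ℝ) • v) :
    (ε = 0 → M = p ^ 2 →
      ∃ c : ZMod p, ∀ t : ZMod p,
        (b : ZMod p) * t ^ 2 + c ∈ {r : ZMod p | ∃ k < M, ((⌊‖x k‖ ^ 2⌋ : ℤ) : ZMod p) = r}) ∧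
    (0 < ε → M = 2 * p ^ 2 - 2 * p + 1 →
      ∃ c : ZMod p, ∀ t : ZMod p, t ≠ 0 →
        (b : ZMod p) * t ^ 2 + c ∈ {r : ZMod p | ∃ k < M, ((⌊‖x k‖ ^ 2⌋ : ℤ) : ZMod p) = r}) := by
  have : Fact p.Prime := ⟨hp⟩
  have hp3 : 3 ≤ p := by
    rcases hodd with ⟨k, rfl⟩
    have := hp.two_le
    omega
  set β : ℝ := 2 * inner ℝ (x 0) v with hβ
  set γ : ℝ := ‖x 0‖ ^ 2 with hγ
  have hX : ∀ k < M, ‖x k‖ ^ 2 = (b + ε) * (k : ℝ) ^ 2 + β * k + γ := by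
    intro k hk
    rw [hx k hk, norm_add_sq_real, inner_smul_right, norm_smul, hv, mul_pow, hαsq, hβ, hγ,
      Real.norm_natCast]
    ring
  refine ⟨fun hε hM => ?_, fun hε hM => ?_⟩
  · subst hε
    have hp2 : 0 < p ^ 2 := by positivity
    obtain ⟨q, a, hq, hqp, hcop, happ⟩ := exists_approx p hp3 β
    rcases le_total 0 (q * β - a) with h0 | h0
    · rw [abs_of_nonneg h0] at happ
      obtain ⟨c, hc⟩ := cover_zero p q hodd a b hb β γ hq hqp hcop h0 happ
      refine ⟨c, fun t => ?_⟩
      obtain ⟨j, hj, hjt⟩ := hc t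
      refine ⟨j, by omega, ?_⟩
      rw [hX j (by omega), add_zero, hjt]
    · rw [abs_of_nonpos h0] at happ
      -- Traversing from the last index `K` replaces `β` by `-β - 2 b K`.
      obtain ⟨K, hK⟩ : ∃ K : ℕ, K = p ^ 2 - 1 := ⟨_, rfl⟩
      obtain ⟨c, hc⟩ := cover_zero p q hodd (-a - 2 * b * K * q) b hb (-β - 2 * b * K)
        (b * K ^ 2 + β * K + γ) hq hqp
        (by
          have := hcop.neg_left.add_mul_right_left (-(2 * b * K))
          rwa [neg_mul, ← sub_eq_add_neg] at this)
        (by push_cast; linarith) (by push_cast; linarith)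
      refine ⟨c, fun t => ?_⟩
      obtain ⟨j, hj, hjt⟩ := hc t
      refine ⟨K - j, by omega, ?_⟩
      rw [hX (K - j) (by omega), ← hjt, Nat.cast_sub (by omega)]
      congr 2
      ring
  · obtain ⟨K, hK⟩ : ∃ K : ℕ, K = p ^ 2 - p := ⟨_, rfl⟩
    have hpp : p ≤ p ^ 2 := Nat.le_self_pow (by norm_num) p
    -- `K` is the middle index; `2 (b + ε) K + β` is the linear coefficient when starting from it.
    obtain ⟨q, a, hq, hqp, hcop, happ⟩ := exists_approx p hp3 (2 * (b + ε) * K + β)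
    rcases le_total 0 (q * (2 * (b + ε) * K + β) - a) with h0 | h0
    · rw [abs_of_nonneg h0] at happ
      obtain ⟨c, hc⟩ := cover_pos p q hodd a b hb (2 * (b + ε) * K + β)
        ((b + ε) * K ^ 2 + β * K + γ) ε hq hqp hε₀ hε₁ hcop h0 happ
      refine ⟨c, fun t ht => ?_⟩
      obtain ⟨j, hj, hjt⟩ := hc t ht
      refine ⟨K + j, by omega, ?_⟩
      rw [hX (K + j) (by omega), ← hjt, Nat.cast_add]
      congr 2
      ring
    · rw [abs_of_nonpos h0] at happ
      obtain ⟨c, hc⟩ := cover_pos p q hodd (-a) b hb (-(2 * (b + ε) * K + β))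
        ((b + ε) * K ^ 2 + β * K + γ) ε hq hqp hε₀ hε₁ hcop.neg_left
        (by push_cast; linarith) (by push_cast; linarith)
      refine ⟨c, fun t ht => ?_⟩
      obtain ⟨j, hj, hjt⟩ := hc t ht
      refine ⟨K - j, by omega, ?_⟩
      rw [hX (K - j) (by omega), ← hjt, Nat.cast_sub (by omega)]
      congr 2
      ring
end
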